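/- arXiv:2103.08027 — 5 statements merged into one kernel-verified Lean document; each statement's English description precedes it below -/
import Mathlib

section
/- Let n ∈ ℕ and let a_1, …, a_n ∈ ℂ. Then the difference ∑_{k=1}^{n} a_k / z^k − ∑_{k=1}^{n} (−1)^k (∑_{l=1}^{k} (−1)^l S_k^{(1)}(l) a_l) / ((z+1)(z+2)⋯(z+k)) is O(1/z^{n+1}) as z → ∞ in ℂ; that is, there exist constants C > 0 and R > 0 such that for all z ∈ ℂ with |z| ≥ R (and z avoiding the poles −1, …, −n and 0) the absolute value of this difference is at most C/|z|^{n+1}. -/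
open Finset in
/-- Unsigned Stirling numbers of the first kind, via the rising-factorial recurrence:
`z(z+1)⋯(z+k−1) = ∑ l, stirling1Unsigned k l * z^l`. -/
def stirling1Unsigned : ℕ → ℕ → ℕ
  | 0, 0 => 1
  | 0, _ + 1 => 0
  | k + 1, 0 => k * stirling1Unsigned k 0
  | k + 1, l + 1 => stirling1Unsigned k l + k * stirling1Unsigned k (l + 1)

/-- The Stirling numbers of the first kind `S_k^{(1)}(l)` of the paper, defined by
`z(z+1)⋯(z+k−1) = (−1)^k ∑_{l=0}^k (−1)^l S_k^{(1)}(l) z^l`, i.e.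
`S_k^{(1)}(l) = (−1)^{k−l}` times the coefficient of `z^l` in the rising factorial. -/
def S1 (k l : ℕ) : ℤ := (-1) ^ (k + l) * stirling1Unsigned k l

/-- The `n`-th Bernoulli polynomial `B_n(x) = ∑_{k=0}^n C(n,k) B_k x^{n−k}`,
with `B_1 = −1/2`. -/
noncomputable def bernPoly (n : ℕ) (x : ℝ) : ℝ :=
  ∑ k ∈ Finset.range (n + 1), (n.choose k : ℝ) * (bernoulli k : ℝ) * x ^ (n - k)

/-- The generalized binomial coefficient `C(w,k) = w(w−1)⋯(w−k+1)/k!`. -/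
noncomputable def cchoose (w : ℂ) (k : ℕ) : ℂ :=
  (∏ i ∈ Finset.range k, (w - i)) / (k.factorial : ℂ)

/-- The rising product `(z+1)(z+2)⋯(z+k)`. -/
noncomputable def risingProd (z : ℂ) (k : ℕ) : ℂ :=
  ∏ i ∈ Finset.range k, (z + i + 1)

/-- The rising product `(x+1)(x+2)⋯(x+k)` over the reals. -/
noncomputable def risingProdR (x : ℝ) (k : ℕ) : ℝ :=
  ∏ i ∈ Finset.range k, (x + i + 1)

/-- The digamma function `ψ(z) = Γ′(z)/Γ(z)`. -/
noncomputable def digamma (z : ℂ) : ℂ := deriv Complex.Gamma z / Complex.Gamma z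

noncomputable def wT (z : ℂ) (n : ℕ) : ℕ → ℂ
  | 0 => 0
  | l + 1 => (wT z n l + (stirling1Unsigned (n + 1) (l + 1) : ℂ)) / z

noncomputable def wB (n : ℕ) : ℕ → ℝ
  | 0 => 0
  | l + 1 => wB n l + (stirling1Unsigned (n + 1) (l + 1) : ℝ)

lemma wB_nonneg (n l : ℕ) : 0 ≤ wB n l := by
  induction l with
  | zero => simp [wB]
  | succ l ih => rw [wB]; positivity

lemma st_zero (n : ℕ) : stirling1Unsigned (n + 1) 0 = 0 := by
  induction n with
  | zero => simp [stirling1Unsigned]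
  | succ n ih => rw [stirling1Unsigned, ih]; simp

lemma st_lt (k : ℕ) : ∀ l, k < l → stirling1Unsigned k l = 0 := by
  induction k with
  | zero => intro l h; cases l with
    | zero => omega
    | succ l => simp [stirling1Unsigned]
  | succ k ih => intro l h; cases l with
    | zero => omega
    | succ l => rw [stirling1Unsigned, ih l (by omega), ih (l+1) (by omega)]; simp

lemma wT_step (z : ℂ) (hz : z ≠ 0) (n l : ℕ) :
    wT z (n + 1) l = (z + n + 1) * wT z n l - (stirling1Unsigned (n + 1) l : ℂ) := by
  induction l with
  | zero => simp [wT, st_zero]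
  | succ l ih =>
    rw [wT, ih, wT]
    rw [stirling1Unsigned.eq_4 (n + 1) l]
    push_cast
    field_simp
    ring

lemma wT_zero (z : ℂ) (l : ℕ) : wT z 0 (l + 1) = 1 / z ^ (l + 1) := by
  induction l with
  | zero => simp [wT, stirling1Unsigned]
  | succ l ih =>
    rw [wT, ih, st_lt _ _ (by omega)]
    simp [pow_succ, div_eq_mul_inv, mul_comm]

lemma wT_bound (z : ℂ) (hz : 1 ≤ ‖z‖) (n l : ℕ) : ‖wT z n l‖ ≤ wB n l / ‖z‖ := by
  induction l with
  | zero => simp [wT, wB]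
  | succ l ih =>
    rw [wT, wB, norm_div]
    gcongr
    refine (norm_add_le _ _).trans ?_
    rw [Complex.norm_natCast]
    gcongr
    exact ih.trans (div_le_self (wB_nonneg n l) hz)

lemma w_exact (z : ℂ) (hz : z ≠ 0) (l : ℕ) (n : ℕ) (h : ∀ j : ℕ, j ≤ n → z ≠ -(j : ℂ)) :
    1 / z ^ (l + 1) - ∑ k ∈ Finset.Icc 1 n, (stirling1Unsigned k (l + 1) : ℂ) / risingProd z k
      = wT z n (l + 1) / risingProd z n := by
  induction n with
  | zero => simp [wT_zero, risingProd]
  | succ n ih =>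
    have ih' := ih (fun j hj => h j (by omega))
    rw [Finset.sum_Icc_succ_top (by omega), ← sub_sub, ih', wT_step z hz]
    have e : risingProd z (n + 1) = risingProd z n * (z + n + 1) := by
      simp [risingProd, Finset.prod_range_succ]
    have h1 : z + n + 1 ≠ 0 := by
      intro h0
      apply h (n + 1) le_rfl
      push_cast
      linear_combination h0
    have h2 : risingProd z n ≠ 0 := by
      rw [risingProd, Finset.prod_ne_zero_iff]
      intro i hi h0
      rw [Finset.mem_range] at hi
      apply h (i + 1) (by omega)
      push_cast
      linear_combination h0
    rw [e]
    field_simp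

lemma rp_bound (z : ℂ) (n : ℕ) (hz : 2 * (n : ℝ) ≤ ‖z‖) :
    (‖z‖ / 2) ^ n ≤ ‖risingProd z n‖ := by
  rw [risingProd, norm_prod]
  rw [← Finset.card_range n, ← Finset.prod_const, Finset.card_range]
  apply Finset.prod_le_prod
  · intros; positivity
  · intro i hi
    rw [Finset.mem_range] at hi
    have h1 : ((i : ℝ) + 1) ≤ n := by exact_mod_cast hi
    have h2 : ‖z‖ ≤ ‖z + i + 1‖ + ‖((i + 1 : ℕ) : ℂ)‖ := by
      have := norm_sub_le (z + i + 1) ((i + 1 : ℕ) : ℂ)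
      have e : z + i + 1 - ((i + 1 : ℕ) : ℂ) = z := by push_cast; ring
      rwa [e] at this
    rw [Complex.norm_natCast] at h2
    push_cast at h2
    linarith

open Finset in
/-- Asymptotic part of the finite Weniger transformation (Lemma 3.1, formula (8)):
the difference between `∑_{k=1}^n a_k/z^k` and its inverse-factorial transform is
`O(1/z^{n+1})` as `z → ∞`. -/
theorem weniger_finite_asymptotic (n : ℕ) (a : ℕ → ℂ) :
    ∃ C > (0 : ℝ), ∃ R > (0 : ℝ), ∀ z : ℂ, R ≤ ‖z‖ →
      (∀ j : ℕ, j ≤ n → z ≠ -(j : ℂ)) →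
      ‖(∑ k ∈ Icc 1 n, a k / z ^ k) -
          ∑ k ∈ Icc 1 n,
            (-1 : ℂ) ^ k * (∑ l ∈ Icc 1 k, (-1 : ℂ) ^ l * (S1 k l : ℂ) * a l) /
              risingProd z k‖ ≤ C / ‖z‖ ^ (n + 1) := by
  have hS : 0 ≤ ∑ l ∈ Icc 1 n, ‖a l‖ * (wB n l * 2 ^ n) :=
    Finset.sum_nonneg fun l _ => by have := wB_nonneg n l; positivity
  refine ⟨(∑ l ∈ Icc 1 n, ‖a l‖ * (wB n l * 2 ^ n)) + 1, by linarith, 2 * n + 1, by positivity, ?_⟩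
  intro z hR h
  have hn : (0 : ℝ) ≤ n := by positivity
  have hz1 : 1 ≤ ‖z‖ := by linarith
  have hz : z ≠ 0 := by simpa using h 0 (by omega)
  have inner : ∀ k ∈ Icc 1 n,
      (-1 : ℂ) ^ k * (∑ l ∈ Icc 1 k, (-1 : ℂ) ^ l * (S1 k l : ℂ) * a l) / risingProd z k
      = ∑ l ∈ Icc 1 n, a l * ((stirling1Unsigned k l : ℂ) / risingProd z k) := by
    intro k hk
    rw [mem_Icc] at hk
    rw [mul_sum, sum_div]
    have hsub : Icc 1 k ⊆ Icc 1 n := Icc_subset_Icc le_rfl hk.2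
    rw [← sum_subset hsub]
    · apply sum_congr rfl
      intro l _
      have e : (-1 : ℂ) ^ k * (-1) ^ l * (-1) ^ (k + l) = 1 := by
        rw [← pow_add, ← pow_add]
        exact Even.neg_one_pow ⟨k + l, rfl⟩
      rw [S1]
      push_cast
      linear_combination (a l * (stirling1Unsigned k l : ℂ) / risingProd z k) * e
    · intro l hl hl'
      rw [mem_Icc] at hl hl'
      rw [st_lt k l (by omega)]
      simp
  rw [sum_congr rfl inner, sum_comm, ← sum_sub_distrib]
  have key : ∀ l ∈ Icc 1 n, ‖a l / z ^ l -
      ∑ k ∈ Icc 1 n, a l * ((stirling1Unsigned k l : ℂ) / risingProd z k)‖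
      ≤ ‖a l‖ * (wB n l * 2 ^ n) / ‖z‖ ^ (n + 1) := by
    intro l hl
    rw [mem_Icc] at hl
    obtain ⟨l, rfl⟩ : ∃ m, l = m + 1 := ⟨l - 1, by omega⟩
    rw [← mul_sum, div_eq_mul_one_div, ← mul_sub, w_exact z hz l n h, norm_mul, norm_div,
      mul_div_assoc]
    refine mul_le_mul_of_nonneg_left ?_ (norm_nonneg _)
    have h0 : 0 < ‖z‖ := by linarith
    have hB := wB_nonneg n (l + 1)
    calc ‖wT z n (l + 1)‖ / ‖risingProd z n‖
        ≤ (wB n (l + 1) / ‖z‖) / (‖z‖ / 2) ^ n := by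
          gcongr
          · exact wT_bound z hz1 n (l + 1)
          · exact rp_bound z n (by linarith)
      _ = wB n (l + 1) * 2 ^ n / ‖z‖ ^ (n + 1) := by rw [div_pow]; field_simp; ring
  refine (norm_sum_le_of_le _ key).trans ?_
  rw [← sum_div]
  gcongr
  linarith
end

section
/- Let n ∈ ℕ, let a_1, …, a_n ∈ ℂ, and let z ∈ ℂ with Re(z) > 0. Then the series ∑_{k=1}^{∞} (−1)^k (∑_{l=1}^{n} (−1)^l S_k^{(1)}(l) a_l) / ((z+1)(z+2)⋯(z+k)) converges and its sum equals the finite sum ∑_{k=1}^{n} a_k / z^k. -/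
namespace WenigerAux

open Filter Topology

noncomputable def FR (x : ℝ) (l k : ℕ) : ℝ := (stirling1Unsigned k l : ℝ) / risingProdR x k
noncomputable def FC (z : ℂ) (l k : ℕ) : ℂ := (stirling1Unsigned k l : ℂ) / risingProd z k

lemma prodR_pos {x : ℝ} (hx : 0 < x) (k : ℕ) : 0 < risingProdR x k :=
  Finset.prod_pos fun i _ => by positivity

lemma factor_norm (z : ℂ) (i : ℕ) : z.re + i + 1 ≤ ‖z + i + 1‖ := by
  have h := Complex.re_le_norm (z + i + 1)
  simpa using h

lemma prod_norm {z : ℂ} (hz : 0 < z.re) (k : ℕ) : risingProdR z.re k ≤ ‖risingProd z k‖ := by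
  unfold risingProdR risingProd
  rw [norm_prod]
  exact Finset.prod_le_prod (fun i _ => by positivity) (fun i _ => factor_norm z i)

lemma prod_ne {z : ℂ} (hz : 0 < z.re) (k : ℕ) : risingProd z k ≠ 0 :=
  norm_pos_iff.1 ((prodR_pos hz k).trans_le (prod_norm hz k))

lemma FR_nonneg {x : ℝ} (hx : 0 < x) (l k : ℕ) : 0 ≤ FR x l k :=
  div_nonneg (Nat.cast_nonneg _) (prodR_pos hx k).le

lemma FC_norm {z : ℂ} (hz : 0 < z.re) (l k : ℕ) : ‖FC z l k‖ ≤ FR z.re l k := by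
  unfold FC FR
  rw [norm_div, Complex.norm_natCast]
  exact div_le_div_of_nonneg_left (Nat.cast_nonneg _) (prodR_pos hz k) (prod_norm hz k)

lemma FR_rec {x : ℝ} (hx : 0 < x) (l k : ℕ) :
    (x + k + 1) * FR x (l + 1) (k + 1) = FR x l k + k * FR x (l + 1) k := by
  have h1 := (prodR_pos hx k).ne'
  have h2 : x + k + 1 ≠ 0 := by positivity
  have h3 : risingProdR x (k + 1) = risingProdR x k * (x + k + 1) := Finset.prod_range_succ _ _
  unfold FR
  rw [h3, stirling1Unsigned]
  push_cast
  field_simp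

lemma FC_rec {z : ℂ} (hz : 0 < z.re) (l k : ℕ) :
    (z + k + 1) * FC z (l + 1) (k + 1) = FC z l k + k * FC z (l + 1) k := by
  have h1 := prod_ne hz k
  have h2 : z + k + 1 ≠ 0 := norm_pos_iff.1 (lt_of_lt_of_le (by positivity) (factor_norm z k))
  have h3 : risingProd z (k + 1) = risingProd z k * (z + k + 1) := Finset.prod_range_succ _ _
  unfold FC
  rw [h3, stirling1Unsigned]
  push_cast
  field_simp

lemma FR_sum {x : ℝ} (hx : 0 < x) (l K : ℕ) :
    x * ∑ k ∈ Finset.range K, FR x (l + 1) (k + 1) + K * FR x (l + 1) K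
      = ∑ k ∈ Finset.range K, FR x l k := by
  induction K with
  | zero => simp
  | succ K ih =>
    rw [Finset.sum_range_succ, Finset.sum_range_succ, ← ih]
    push_cast
    linear_combination FR_rec hx l K

lemma FC_sum {z : ℂ} (hz : 0 < z.re) (l K : ℕ) :
    z * ∑ k ∈ Finset.range K, FC z (l + 1) (k + 1) + K * FC z (l + 1) K
      = ∑ k ∈ Finset.range K, FC z l k := by
  induction K with
  | zero => simp
  | succ K ih =>
    rw [Finset.sum_range_succ, Finset.sum_range_succ, ← ih]
    push_cast
    linear_combination FC_rec hz l K

lemma stir_zero (k : ℕ) : stirling1Unsigned (k + 1) 0 = 0 := by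
  induction k with
  | zero => simp [stirling1Unsigned]
  | succ k ih => rw [stirling1Unsigned, ih, mul_zero]

lemma FR_summable {x : ℝ} (hx : 0 < x) (l : ℕ) : Summable (FR x l) := by
  induction l with
  | zero =>
    rw [← summable_nat_add_iff 1]
    simp [FR, stir_zero]
  | succ l ih =>
    rw [← summable_nat_add_iff 1]
    refine summable_of_sum_range_le (c := (∑' k, FR x l k) / x) (fun k => FR_nonneg hx _ _) ?_
    intro K
    rw [le_div_iff₀ hx]
    have h1 := FR_sum hx l K
    have h2 := ih.sum_le_tsum (Finset.range K) (fun k _ => FR_nonneg hx _ _)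
    have h3 : 0 ≤ K * FR x (l + 1) K := mul_nonneg (Nat.cast_nonneg _) (FR_nonneg hx _ _)
    linarith

lemma FR_lim {x : ℝ} (hx : 0 < x) (l : ℕ) :
    Tendsto (fun K : ℕ => (K : ℝ) * FR x (l + 1) K) atTop (𝓝 0) := by
  have hs := FR_summable hx (l + 1)
  have h1 := (FR_summable hx l).hasSum.tendsto_sum_nat
  have h2 := (((summable_nat_add_iff 1).2 hs).hasSum.tendsto_sum_nat).const_mul x
  have h3 := h1.sub h2
  have h4 : (fun K : ℕ => ∑ k ∈ Finset.range K, FR x l k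
      - x * ∑ k ∈ Finset.range K, FR x (l + 1) (k + 1))
      = fun K : ℕ => (K : ℝ) * FR x (l + 1) K := by
    funext K
    linarith [FR_sum hx l K]
  rw [h4] at h3
  generalize (∑' k, FR x l k - x * ∑' k, FR x (l + 1) (k + 1)) = L at h3
  have hL : 0 ≤ L := ge_of_tendsto' h3
    (fun K => mul_nonneg (Nat.cast_nonneg _) (FR_nonneg hx _ _))
  rcases hL.eq_or_lt with h | h
  · rwa [← h] at h3
  · exfalso
    apply Real.not_summable_one_div_natCast
    have hev : ∀ᶠ K : ℕ in atTop, L / 2 < (K : ℝ) * FR x (l + 1) K :=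
      h3.eventually (lt_mem_nhds (by linarith))
    refine Summable.of_norm_bounded_eventually_nat (hs.mul_left (2 / L)) ?_
    filter_upwards [hev, eventually_gt_atTop 0] with K hK hK0
    have hK1 : (0 : ℝ) < K := by exact_mod_cast hK0
    rw [Real.norm_of_nonneg (by positivity), div_le_iff₀ hK1]
    have : 2 / L * (L / 2) ≤ 2 / L * ((K : ℝ) * FR x (l + 1) K) := by gcongr
    have h5 : 2 / L * (L / 2) = 1 := by field_simp
    linarith

lemma FC_summable {z : ℂ} (hz : 0 < z.re) (l : ℕ) : Summable (FC z l) :=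
  Summable.of_norm_bounded (FR_summable hz l) (FC_norm hz l)

lemma FC_lim {z : ℂ} (hz : 0 < z.re) (l : ℕ) :
    Tendsto (fun K : ℕ => (K : ℂ) * FC z (l + 1) K) atTop (𝓝 0) := by
  refine squeeze_zero_norm (fun K => ?_) (FR_lim hz l)
  rw [norm_mul, Complex.norm_natCast]
  exact mul_le_mul_of_nonneg_left (FC_norm hz _ _) (Nat.cast_nonneg _)

lemma FC_hasSum {z : ℂ} (hz : 0 < z.re) (l : ℕ) : HasSum (FC z l) (1 / z ^ l) := by
  have hz0 : z ≠ 0 := by rintro rfl; simp at hz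
  induction l with
  | zero =>
    have := hasSum_single (f := FC z 0) 0 (by
      intro k hk
      obtain ⟨k, rfl⟩ := Nat.exists_eq_succ_of_ne_zero hk
      simp [FC, stir_zero])
    simpa [FC, stirling1Unsigned, risingProd] using this
  | succ l ih =>
    have hs := FC_summable hz (l + 1)
    have h1 := ih.tendsto_sum_nat.sub (FC_lim hz l)
    have h2 := (((summable_nat_add_iff 1).2 hs).hasSum.tendsto_sum_nat).const_mul z
    have h4 : (fun K : ℕ => ∑ k ∈ Finset.range K, FC z l k - (K : ℂ) * FC z (l + 1) K)
      = fun K : ℕ => z * ∑ k ∈ Finset.range K, FC z (l + 1) (k + 1) := by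
      funext K
      linear_combination -FC_sum hz l K
    rw [h4] at h1
    have h5 := tendsto_nhds_unique h1 h2
    have h6 := hs.tsum_eq_zero_add
    have h7 : FC z (l + 1) 0 = 0 := by simp [FC, stirling1Unsigned]
    have h8 : ∑' k, FC z (l + 1) k = 1 / z ^ (l + 1) := by
      rw [h6, h7, zero_add, pow_succ, ← div_div, eq_div_iff hz0]
      linear_combination -h5
    exact h8 ▸ hs.hasSum

lemma FC_hasSum' {z : ℂ} (hz : 0 < z.re) (l : ℕ) (hl : 1 ≤ l) :
    HasSum (fun k => FC z l (k + 1)) (1 / z ^ l) := by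
  obtain ⟨l, rfl⟩ := Nat.exists_eq_add_of_le' hl
  rw [hasSum_nat_add_iff 1]
  simpa [FC, stirling1Unsigned] using FC_hasSum hz (l + 1)

lemma main (n : ℕ) (a : ℕ → ℂ) (z : ℂ) (hz : 0 < z.re) :
    HasSum (fun k : ℕ =>
      (-1 : ℂ) ^ (k + 1) * (∑ l ∈ Finset.Icc 1 n, (-1 : ℂ) ^ l * (S1 (k + 1) l : ℂ) * a l) /
        risingProd z (k + 1)) (∑ k ∈ Finset.Icc 1 n, a k / z ^ k) := by
  have h := hasSum_sum (s := Finset.Icc 1 n) (f := fun l k => a l * FC z l (k + 1))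
    (a := fun l => a l * (1 / z ^ l))
    (fun l hl => (FC_hasSum' hz l (Finset.mem_Icc.1 hl).1).mul_left (a l))
  simp only [mul_one_div] at h
  refine h.congr_fun ?_
  intro k
  rw [Finset.mul_sum, Finset.sum_div]
  refine Finset.sum_congr rfl fun l _ => ?_
  have hs : (-1 : ℂ) ^ (k + 1) * (-1) ^ l * (-1) ^ (k + 1 + l) = 1 := by
    rw [← pow_add, ← pow_add]
    exact Even.neg_one_pow ⟨_, rfl⟩
  unfold FC S1
  push_cast
  rw [← mul_div_assoc]
  congr 1
  linear_combination (a l * (stirling1Unsigned (k + 1) l : ℂ)) * hs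

end WenigerAux

open Finset in
/-- Exact part of the finite Weniger transformation (Lemma 3.1, formula (9)):
for `Re(z) > 0`, the inverse factorial series with coefficients
`(−1)^k ∑_{l=1}^n (−1)^l S_k^{(1)}(l) a_l` converges to `∑_{k=1}^n a_k/z^k`. -/
theorem weniger_finite_exact (n : ℕ) (a : ℕ → ℂ) (z : ℂ) (hz : 0 < z.re) :
    Summable (fun k : ℕ =>
      (-1 : ℂ) ^ (k + 1) * (∑ l ∈ Icc 1 n, (-1 : ℂ) ^ l * (S1 (k + 1) l : ℂ) * a l) /
        risingProd z (k + 1)) ∧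
    ∑' k : ℕ,
        (-1 : ℂ) ^ (k + 1) * (∑ l ∈ Icc 1 n, (-1 : ℂ) ^ l * (S1 (k + 1) l : ℂ) * a l) /
          risingProd z (k + 1)
      = ∑ k ∈ Icc 1 n, a k / z ^ k := by
  exact ⟨(WenigerAux.main n a z hz).summable, (WenigerAux.main n a z hz).tsum_eq⟩
end

section
/- Uniqueness of inverse factorial series expansions: Let f : ℂ → ℂ and let (b_k)_{k≥1} and (c_k)_{k≥1} be sequences of complex numbers. Assume that for all z ∈ ℂ with Re(z) > 0 the series ∑_{k=1}^{∞} b_k / ((z+1)(z+2)⋯(z+k)) converges absolutely with sum f(z), and that for every n ∈ ℕ there exist constants C_n > 0 and R_n > 0 such that |f(x) − ∑_{k=1}^{n} c_k / ((x+1)(x+2)⋯(x+k))| ≤ C_n / x^{n+1} for all real x ≥ R_n. Then c_k = b_k for all k ∈ ℕ. -/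
theorem aux_norm (x : ℝ) (hx : 0 ≤ x) (k : ℕ) : ‖risingProd (x : ℂ) k‖ = risingProdR x k := by
  unfold risingProd risingProdR
  rw [norm_prod]
  refine Finset.prod_congr rfl fun i _ => ?_
  have : (x : ℂ) + i + 1 = ((x + i + 1 : ℝ) : ℂ) := by push_cast; rfl
  rw [this, Complex.norm_real, Real.norm_eq_abs, abs_of_nonneg (by positivity)]

theorem aux_pos (x : ℝ) (hx : 0 ≤ x) (k : ℕ) : 0 < risingProdR x k :=
  Finset.prod_pos fun i _ => by positivity

theorem aux_succ (x : ℝ) (k : ℕ) : risingProdR x (k + 1) = risingProdR x k * (x + k + 1) :=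
  Finset.prod_range_succ _ _

theorem aux_mono (x : ℝ) (hx : 1 ≤ x) (N k : ℕ) :
    risingProdR 1 (N + k) * risingProdR x N ≤ risingProdR x (N + k) * risingProdR 1 N := by
  induction k with
  | zero => simp [mul_comm]
  | succ k ih =>
    rw [← add_assoc, aux_succ, aux_succ]
    have h1 := aux_pos x (by linarith) (N + k)
    have h2 := aux_pos 1 (by norm_num) N
    have h3 := aux_pos 1 (by norm_num) (N + k)
    have h4 := aux_pos x (by linarith) N
    calc _ = (risingProdR 1 (N + k) * risingProdR x N) * (1 + (N + k : ℕ) + 1) := by ring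
      _ ≤ (risingProdR x (N + k) * risingProdR 1 N) * (x + (N + k : ℕ) + 1) := by gcongr
      _ = _ := by ring

theorem aux_lower (x : ℝ) (hx : 0 ≤ x) (k : ℕ) : x ^ k ≤ risingProdR x k := by
  induction k with
  | zero => simp [risingProdR]
  | succ k ih =>
    rw [aux_succ, pow_succ]
    have : (0 : ℝ) ≤ k := k.cast_nonneg
    exact mul_le_mul ih (by linarith) hx (aux_pos x hx k).le

theorem aux_upper (x : ℝ) (hx : 0 ≤ x) (k : ℕ) (hk : (k : ℝ) ≤ x) :
    risingProdR x k ≤ (2 * x) ^ k := by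
  induction k with
  | zero => simp [risingProdR]
  | succ k ih =>
    push_cast at hk
    rw [aux_succ, pow_succ]
    exact mul_le_mul (ih (by linarith)) (by linarith) (by positivity) (by positivity)

theorem aux_tail (b : ℕ → ℂ) (n : ℕ)
    (h1 : Summable (fun k : ℕ => ‖b (k + 1) / risingProd ((1 : ℝ) : ℂ) (k + 1)‖)) :
    ∃ K : ℝ, ∀ x : ℝ, 1 ≤ x →
      Summable (fun k : ℕ => ‖b (k + 1) / risingProd (x : ℂ) (k + 1)‖) →
      ‖∑' k : ℕ, b (k + n + 1) / risingProd (x : ℂ) (k + n + 1)‖ ≤ K / x ^ (n + 1) := by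
  have h1' := (summable_nat_add_iff n).2 h1
  refine ⟨risingProdR 1 (n + 1) *
    ∑' k : ℕ, ‖b (k + n + 1) / risingProd ((1 : ℝ) : ℂ) (k + n + 1)‖, fun x hx h => ?_⟩
  have hx0 : (0 : ℝ) < x := by linarith
  have h' := (summable_nat_add_iff n).2 h
  refine (norm_tsum_le_tsum_norm h').trans ?_
  have : ∀ k : ℕ, ‖b (k + n + 1) / risingProd (x : ℂ) (k + n + 1)‖ ≤
      (risingProdR 1 (n + 1) / x ^ (n + 1)) *
        ‖b (k + n + 1) / risingProd ((1 : ℝ) : ℂ) (k + n + 1)‖ := by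
    intro k
    rw [norm_div, norm_div, aux_norm x hx0.le, aux_norm 1 zero_le_one]
    have e : k + n + 1 = (n + 1) + k := by ring
    have m := aux_mono x hx (n + 1) k
    rw [← e] at m
    have p1 := aux_pos x hx0.le (k + n + 1)
    have p2 := aux_pos 1 zero_le_one (k + n + 1)
    have p3 := aux_pos 1 zero_le_one (n + 1)
    have l := aux_lower x hx0.le (n + 1)
    rw [div_mul_div_comm, div_le_div_iff₀ p1 (by positivity)]
    have m2 : x ^ (n + 1) * risingProdR 1 (k + n + 1) ≤
        risingProdR 1 (n + 1) * risingProdR x (k + n + 1) := by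
      calc _ ≤ risingProdR x (n + 1) * risingProdR 1 (k + n + 1) := by gcongr
        _ ≤ _ := by linarith
    calc _ ≤ ‖b (k + n + 1)‖ * (risingProdR 1 (n + 1) * risingProdR x (k + n + 1)) := by gcongr
      _ = _ := by ring
  refine (h'.tsum_le_tsum this (h1'.mul_left _)).trans ?_
  rw [tsum_mul_left]
  apply le_of_eq
  ring

open Finset in
/-- Uniqueness of inverse factorial series expansions (Lemma 3.2). -/
theorem inverse_factorial_series_unique (f : ℂ → ℂ) (b c : ℕ → ℂ)
    (hb : ∀ z : ℂ, 0 < z.re →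
      Summable (fun k : ℕ => ‖b (k + 1) / risingProd z (k + 1)‖) ∧
      f z = ∑' k : ℕ, b (k + 1) / risingProd z (k + 1))
    (hc : ∀ n : ℕ, 1 ≤ n → ∃ C > (0 : ℝ), ∃ R > (0 : ℝ), ∀ x : ℝ, R ≤ x →
      ‖f x - ∑ k ∈ Icc 1 n, c k / risingProd (x : ℂ) k‖ ≤ C / x ^ (n + 1)) :
    ∀ k : ℕ, 1 ≤ k → c k = b k := by
  intro k
  induction k using Nat.strong_induction_on with
  | _ n ih =>
  intro hn
  obtain ⟨C, hC, R, hR, h⟩ := hc n hn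
  obtain ⟨K, hK⟩ := aux_tail b n (hb ((1 : ℝ) : ℂ) (by simp)).1
  have key : ∀ x : ℝ, max (max 1 R) n ≤ x → ‖c n - b n‖ ≤ ((C + K) * 2 ^ n) / x := by
    intro x hx
    have hx1 : 1 ≤ x := le_trans (le_trans (le_max_left _ _) (le_max_left _ _)) hx
    have hxR : R ≤ x := le_trans (le_trans (le_max_right _ _) (le_max_left _ _)) hx
    have hxn : (n : ℝ) ≤ x := le_trans (le_max_right _ _) hx
    have hx0 : 0 < x := by linarith
    obtain ⟨hs, hf⟩ := hb (x : ℂ) (by simpa using hx0)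
    have ht := hK x hx1 hs
    have hh := h x hxR
    have hsplit := hs.of_norm.sum_add_tsum_nat_add n
    have hre : ∑ k ∈ Icc 1 n, b k / risingProd (x : ℂ) k =
        ∑ k ∈ range n, b (k + 1) / risingProd (x : ℂ) (k + 1) := by
      rw [Finset.range_eq_Ico, Finset.sum_Ico_add' (fun k => b k / risingProd (x : ℂ) k) 0 n 1]
      rfl
    have hdiff : ∑ k ∈ Icc 1 n, c k / risingProd (x : ℂ) k -
        ∑ k ∈ Icc 1 n, b k / risingProd (x : ℂ) k = (c n - b n) / risingProd (x : ℂ) n := by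
      rw [← Finset.sum_sub_distrib, Finset.sum_eq_single n]
      · rw [sub_div]
      · intro j hj hjn
        rw [Finset.mem_Icc] at hj
        rw [ih j (by omega) hj.1, sub_self]
      · intro hcon
        exact absurd (Finset.mem_Icc.2 ⟨hn, le_rfl⟩) hcon
    have e : (c n - b n) / risingProd (x : ℂ) n =
        (∑' k : ℕ, b (k + n + 1) / risingProd (x : ℂ) (k + n + 1)) -
          (f x - ∑ k ∈ Icc 1 n, c k / risingProd (x : ℂ) k) := by
      rw [← hdiff, hf, ← hsplit, hre]; ring
    have b1 : ‖(c n - b n) / risingProd (x : ℂ) n‖ ≤ (C + K) / x ^ (n + 1) := by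
      rw [e]
      refine (norm_sub_le _ _).trans ?_
      rw [add_div]; linarith
    have p := aux_pos x hx0.le n
    have u := aux_upper x hx0.le n hxn
    rw [norm_div, aux_norm x hx0.le, div_le_iff₀ p] at b1
    have hnn : 0 ≤ (C + K) / x ^ (n + 1) := by
      have := (norm_nonneg _).trans ht
      have : 0 ≤ C / x ^ (n + 1) := by positivity
      rw [add_div]; linarith
    calc _ ≤ _ := b1
      _ ≤ (C + K) / x ^ (n + 1) * (2 * x) ^ n := by gcongr
      _ = _ := by rw [mul_pow, pow_succ]; field_simp
  have lim : Filter.Tendsto (fun x : ℝ => ((C + K) * 2 ^ n) / x) Filter.atTop (nhds 0) :=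
    Filter.Tendsto.const_div_atTop Filter.tendsto_id _
  have h0 : ‖c n - b n‖ ≤ 0 :=
    ge_of_tendsto lim ((Filter.eventually_ge_atTop _).mono key)
  exact sub_eq_zero.1 (norm_le_zero_iff.1 h0)
end

section
/- Inverse factorial series expansion for the Hurwitz zeta function: Let y ∈ [0,1] be real, let s ∈ ℂ with Re(s) > 1, let a ∈ ℕ₀, and let z ∈ ℂ with Re(z) > 0. Then the series ∑_{k=1}^{∞} (−1)^{k+a} (∑_{l=1}^{k} C(1−s, l+a) S_k^{(1)}(l) B_{l+a}(y)) / ((z+1)(z+2)⋯(z+k)) converges absolutely, and ∑_{k=0}^{∞} (k + z + 1 − y)^{−s} = z^{1−s}/(s−1) + (z^{1−s}/(s−1)) ∑_{k=1}^{a} (−1)^k C(1−s, k) B_k(y) / z^k + (z^{1−s−a}/(s−1)) ∑_{k=1}^{∞} (−1)^{k+a} (∑_{l=1}^{k} C(1−s, l+a) S_k^{(1)}(l) B_{l+a}(y)) / ((z+1)(z+2)⋯(z+k)). -/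
noncomputable section HZ

open Finset Complex MeasureTheory Filter Topology

open scoped Nat

def HZrise (u : ℂ) (k : ℕ) : ℂ := ∏ i ∈ range k, (u + i)

def HZd (β : ℕ → ℂ) (k : ℕ) : ℂ := ∑ l ∈ Icc 1 k, (stirling1Unsigned k l : ℂ) * β l

lemma HZ_st_gt : ∀ k l : ℕ, k < l → stirling1Unsigned k l = 0 := by
  intro k
  induction k with
  | zero => intro l hl; obtain ⟨m, rfl⟩ := Nat.exists_eq_succ_of_ne_zero (by omega : l ≠ 0); rfl
  | succ k ih =>
    intro l hl
    obtain ⟨m, rfl⟩ := Nat.exists_eq_succ_of_ne_zero (by omega : l ≠ 0)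
    simp only [stirling1Unsigned]
    rw [ih m (by omega), ih (m+1) (by omega)]; simp

lemma HZ_st_zero : ∀ k : ℕ, stirling1Unsigned (k + 1) 0 = 0 := by
  intro k
  induction k with
  | zero => simp [stirling1Unsigned]
  | succ k ih => rw [stirling1Unsigned, ih, mul_zero]

lemma HZd_range (β : ℕ → ℂ) (k : ℕ) :
    HZd β k = ∑ l ∈ range k, (stirling1Unsigned k (l + 1) : ℂ) * β (l + 1) := by
  rw [HZd, range_eq_Ico, Finset.sum_Ico_add' (fun l => (stirling1Unsigned k l : ℂ) * β l) 0 k 1]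
  rfl

lemma HZd_succ (β : ℕ → ℂ) (k : ℕ) :
    HZd β (k + 2) = HZd (fun l => β (l + 1)) (k + 1) + (k + 1) * HZd β (k + 1) := by
  have h1 : HZd β (k + 2) = ∑ l ∈ range (k + 2), ((stirling1Unsigned (k + 1) l : ℂ) * β (l + 1)
      + (k + 1) * ((stirling1Unsigned (k + 1) (l + 1) : ℂ) * β (l + 1))) := by
    rw [HZd_range]
    refine Finset.sum_congr rfl fun l _ => ?_
    rw [stirling1Unsigned]; push_cast; ring
  rw [h1, Finset.sum_add_distrib, ← Finset.mul_sum]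
  congr 1
  · rw [Finset.sum_range_succ', HZ_st_zero, HZd_range]; simp
  · rw [Finset.sum_range_succ, HZ_st_gt (k+1) (k+1+1) (by omega), HZd_range]; simp

lemma HZd_one (β : ℕ → ℂ) : HZd β 1 = β 1 := by
  simp [HZd, stirling1Unsigned]

lemma HZrise_eq (u : ℂ) (k : ℕ) : HZrise u (k + 1) = HZd (fun l => u ^ l) (k + 1) := by
  induction k with
  | zero => simp [HZd_one, HZrise]
  | succ k ih =>
    rw [HZd_succ, ← ih]
    have : HZd (fun l => u ^ (l + 1)) (k + 1) = u * HZd (fun l => u ^ l) (k + 1) := by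
      rw [HZd, HZd, Finset.mul_sum]; refine Finset.sum_congr rfl fun l _ => by ring
    rw [this, ← ih, HZrise, Finset.prod_range_succ, ← HZrise]; push_cast; ring

lemma HZ_prod_le (τ : ℝ) (hτ : 0 ≤ τ) (k : ℕ) :
    ∏ i ∈ range k, (1 + τ ^ 2 / ((i : ℝ) + 1) ^ 2) ≤ Real.exp (Real.pi * τ) := by
  rcases hτ.eq_or_lt with rfl | hτ
  · simp
  have hp : 0 < Real.pi * τ := by positivity
  have h := Complex.tendsto_euler_sin_prod (τ * I)
  have h2 : Tendsto (fun n : ℕ => (Real.pi * τ) * ∏ i ∈ range n, (1 + τ ^ 2 / ((i : ℝ) + 1) ^ 2))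
      atTop (𝓝 (Real.sinh (Real.pi * τ))) := by
    have h3 : Tendsto (fun n : ℕ => (((Real.pi * τ) * ∏ i ∈ range n, (1 + τ ^ 2 / ((i : ℝ) + 1) ^ 2) : ℝ) : ℂ))
      atTop (𝓝 ((Real.sinh (Real.pi * τ) : ℝ) : ℂ)) := by
      have h4 := h.mul_const (-I)
      convert h4 using 2
      · push_cast
        have : ∀ j : ℕ, (1 - ((τ:ℂ) * I) ^ 2 / ((j:ℂ) + 1) ^ 2) = 1 + (τ:ℂ) ^ 2 / ((j:ℂ) + 1) ^ 2 := by
          intro j; rw [mul_pow, I_sq]; ring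
        simp_rw [this]
        linear_combination ((Real.pi:ℂ) * τ * ∏ j ∈ range _, (1 + (τ:ℂ) ^ 2 / ((j:ℂ) + 1) ^ 2)) * I_sq
      · rw [← mul_assoc, Complex.sin_mul_I]; push_cast
        linear_combination (Complex.sinh (Real.pi * τ)) * I_sq
    have := (Complex.continuous_re.tendsto _).comp h3
    simpa only [Function.comp_def, Complex.ofReal_re] using this
  have hmono : Monotone (fun n : ℕ => (Real.pi * τ) * ∏ i ∈ range n, (1 + τ ^ 2 / ((i : ℝ) + 1) ^ 2)) := by
    refine monotone_nat_of_le_succ fun n => ?_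
    rw [Finset.prod_range_succ]
    have : 0 ≤ ∏ i ∈ range n, (1 + τ ^ 2 / ((i : ℝ) + 1) ^ 2) := Finset.prod_nonneg fun i _ => by positivity
    refine mul_le_mul_of_nonneg_left ?_ hp.le
    exact le_mul_of_one_le_right this (by have : 0 ≤ τ ^ 2 / ((n : ℝ) + 1) ^ 2 := by positivity
                                          linarith)
  have hle := hmono.ge_of_tendsto h2 k
  have hs : Real.sinh (Real.pi * τ) ≤ (Real.pi * τ) * Real.exp (Real.pi * τ) := by
    rw [Real.sinh_eq]
    set x := Real.pi * τ
    have e1 : Real.exp (-x) = (Real.exp x)⁻¹ := Real.exp_neg x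
    have e2 : 1 - 2 * x ≤ Real.exp (-(2*x)) := by have := Real.add_one_le_exp (-(2*x)); linarith
    have e3 : Real.exp (-x) = Real.exp x * Real.exp (-(2*x)) := by rw [← Real.exp_add]; congr 1; ring
    have := mul_le_mul_of_nonneg_left e2 (Real.exp_pos x).le
    rw [e3]; nlinarith
  exact le_of_mul_le_mul_left (hle.trans hs) hp

lemma HZrise_le (u : ℂ) (hu : u.re = 0) (k : ℕ) :
    ‖HZrise u (k + 1)‖ ≤ ‖u‖ * k ! * Real.exp (Real.pi * ‖u‖) := by
  have hfac : ∏ i ∈ range k, ((i : ℝ) + 1) = k ! := by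
    rw [← Finset.prod_range_add_one_eq_factorial]; push_cast; rfl
  rw [HZrise, Finset.prod_range_succ', norm_mul, norm_prod]
  have h1 : ∏ i ∈ range k, ‖u + ((i + 1 : ℕ) : ℂ)‖ ≤ ∏ i ∈ range k, (((i : ℝ) + 1) * (1 + ‖u‖ ^ 2 / ((i : ℝ) + 1) ^ 2)) := by
    refine Finset.prod_le_prod (fun _ _ => norm_nonneg _) fun i _ => ?_
    refine abs_le_of_sq_le_sq' ?_ (by positivity) |>.2
    have hi : (0:ℝ) < (i : ℝ) + 1 := by positivity
    have e : ‖u + ((i + 1 : ℕ) : ℂ)‖ ^ 2 = ‖u‖ ^ 2 + ((i : ℝ) + 1) ^ 2 := by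
      rw [← Complex.normSq_eq_norm_sq, ← Complex.normSq_eq_norm_sq, Complex.normSq_apply, Complex.normSq_apply]
      simp [hu]; ring
    rw [e]
    have : (((i : ℝ) + 1) * (1 + ‖u‖ ^ 2 / ((i : ℝ) + 1) ^ 2)) ^ 2 = ((i : ℝ) + 1)^2 + 2 * ‖u‖ ^ 2 + (‖u‖^2 / ((i : ℝ) + 1))^2 := by
      field_simp; ring
    rw [this]
    nlinarith [sq_nonneg (‖u‖^2 / ((i : ℝ) + 1)), sq_nonneg ‖u‖]
  rw [Finset.prod_mul_distrib, hfac] at h1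
  have h2 := HZ_prod_le ‖u‖ (norm_nonneg _) k
  have h3 := h1.trans (mul_le_mul_of_nonneg_left h2 (by positivity))
  have := mul_le_mul_of_nonneg_right h3 (norm_nonneg u)
  simp only [Nat.cast_zero, add_zero]
  linarith

lemma HZ_rp_pos (σ : ℝ) (hσ : 0 < σ) (k : ℕ) : 0 < risingProdR σ k := by
  unfold risingProdR; exact Finset.prod_pos fun i _ => by positivity

lemma HZ_rp_le (σ : ℝ) (hσ : 0 < σ) (z : ℂ) (hz : σ ≤ z.re) (k : ℕ) : risingProdR σ k ≤ ‖risingProd z k‖ := by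
  unfold risingProdR risingProd
  rw [norm_prod]
  refine Finset.prod_le_prod (fun i _ => by positivity) fun i _ => ?_
  refine le_trans ?_ (Complex.re_le_norm _)
  simp; linarith

lemma HZ_rp_ne (z : ℂ) (hz : 0 < z.re) (k : ℕ) : risingProd z k ≠ 0 := by
  have := (HZ_rp_pos z.re hz k).trans_le (HZ_rp_le z.re hz z le_rfl k)
  exact norm_pos_iff.mp this

lemma HZ_gs (σ : ℝ) (hσ : 0 < σ) : ∃ C : ℝ, 0 ≤ C ∧ ∀ k : ℕ,
    (k ! : ℝ) / risingProdR σ (k + 1) ≤ C * ((k : ℝ) + 1) ^ (-1 - σ) := by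
  obtain ⟨C, hC⟩ := (Real.GammaSeq_tendsto_Gamma σ).isBoundedUnder_le.bddAbove_range
  refine ⟨σ * max C 0, by positivity, fun k => ?_⟩
  have h := (hC ⟨k + 1, rfl⟩).trans (le_max_left C 0)
  rw [Real.GammaSeq, Finset.prod_range_succ'] at h
  have e : ∏ j ∈ range (k + 1), (σ + ((j + 1 : ℕ) : ℝ)) = risingProdR σ (k + 1) := by
    unfold risingProdR; refine Finset.prod_congr rfl fun i _ => ?_; push_cast; ring
  rw [e] at h
  have hp := HZ_rp_pos σ hσ (k+1)
  have hk : (0:ℝ) < (k:ℝ) + 1 := by positivity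
  rw [Nat.factorial_succ] at h
  push_cast at h
  rw [add_zero, div_le_iff₀ (by positivity)] at h
  rw [div_le_iff₀ hp, Real.rpow_sub hk, Real.rpow_neg_one]
  have hk2 := Real.rpow_pos_of_pos hk σ
  rw [show σ * max C 0 * (((k:ℝ) + 1)⁻¹ / ((k:ℝ) + 1) ^ σ) * risingProdR σ (k+1) = (max C 0 * (risingProdR σ (k + 1) * σ)) / (((k:ℝ)+1) * ((k:ℝ) + 1) ^ σ) by field_simp]
  rw [le_div_iff₀ (by positivity)]
  linarith

abbrev HZq (n : ℤ) : ℂ := 2 * Real.pi * I * n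

abbrev HZE (y : ℝ) (n : ℤ) : ℂ := fourier n (y : AddCircle (1 : ℝ))

lemma HZE_norm (y : ℝ) (n : ℤ) : ‖HZE y n‖ = 1 := by
  unfold HZE; rw [fourier_apply]; exact Circle.norm_coe _

lemma HZ_bern (n : ℕ) (y : ℝ) : bernPoly n y = bernoulliFun n y := by
  rw [bernPoly, bernoulliFun, Polynomial.bernoulli, Polynomial.map_sum, Polynomial.eval_finsetSum]
  refine Finset.sum_congr rfl fun i _ => ?_
  simp only [Polynomial.map_monomial, Polynomial.eval_monomial, map_mul, map_natCast, eq_ratCast]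
  ring

lemma HZq_ne {n : ℤ} (hn : n ≠ 0) : HZq n ≠ 0 := by
  have := Complex.two_pi_I_ne_zero
  simp [HZq, hn]

lemma HZ_F1 (y : ℝ) (hy0 : 0 ≤ y) (hy1 : y ≤ 1) (N : ℕ) (hN : 2 ≤ N) :
    HasSum (fun n : ℤ => HZE y n / HZq n ^ N) (-((bernPoly N y : ℂ) / (N ! : ℂ))) := by
  have h := (hasSum_one_div_pow_mul_fourier_mul_bernoulliFun hN (x := y) ⟨hy0, hy1⟩).mul_left
    (1 / (2 * (Real.pi : ℂ) * I) ^ N)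
  have hne := Complex.two_pi_I_ne_zero
  convert! h using 1
  · ext n
    rw [HZq, mul_pow]
    simp only [div_eq_mul_inv, mul_inv]; ring
  · rw [HZ_bern]; field_simp

lemma HZ_F2 (y : ℝ) (hy0 : 0 ≤ y) (hy1 : y ≤ 1) (a : ℕ) (ha : 1 ≤ a) (v : ℂ) (k : ℕ) :
    HasSum (fun n : ℤ => -(HZE y n / HZq n ^ a * HZrise (v / HZq n) (k + 1)))
      (HZd (fun l => v ^ l * ((bernPoly (l + a) y : ℂ) / ((l + a)! : ℂ))) (k + 1)) := by
  have h : ∀ l ∈ Icc 1 (k + 1), HasSum (fun n : ℤ => (stirling1Unsigned (k+1) l : ℂ) *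
      (v ^ l * -(HZE y n / HZq n ^ (l + a)))) ((stirling1Unsigned (k+1) l : ℂ) * (v ^ l * ((bernPoly (l + a) y : ℂ) / ((l + a)! : ℂ)))) := by
    intro l hl
    rw [mem_Icc] at hl
    have := (HZ_F1 y hy0 hy1 (l + a) (by omega)).neg
    rw [neg_neg] at this
    exact (this.mul_left _).mul_left _
  have h2 := hasSum_sum h
  rw [HZd]
  convert! h2 using 1
  ext n
  rw [HZrise_eq, HZd, Finset.mul_sum, ← Finset.sum_neg_distrib]
  refine Finset.sum_congr rfl fun l _ => ?_
  rw [div_pow, pow_add]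
  simp only [div_eq_mul_inv, mul_inv]; ring

lemma HZ_coeff (w : ℝ) (hw : 0 < w) (n : ℤ) :
    fourierCoeffOn (zero_lt_one' ℝ) (fun x : ℝ => (w : ℂ) * exp (w * x) / (exp w - 1) - 1 - w * (x - 1 / 2)) n
      = -((w : ℂ) / HZq n) ^ 2 / (1 - w / HZq n) := by
  have hwc : (w : ℂ) ≠ 0 := by exact_mod_cast hw.ne'
  have hE : exp (w : ℂ) - 1 ≠ 0 := by
    have : 1 < Real.exp w := Real.one_lt_exp_iff.mpr hw
    rw [← Complex.ofReal_exp]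
    norm_cast
    linarith
  have d0 : ∀ x : ℝ, HasDerivAt (fun x : ℝ => exp ((w : ℂ) * x)) (w * exp (w * x)) x := by
    intro x
    have := ((Complex.ofRealCLM.hasDerivAt (x := x)).const_mul (w : ℂ)).cexp
    simpa [mul_comm] using this
  have dl : ∀ x : ℝ, HasDerivAt (fun x : ℝ => (x : ℂ)) 1 x := fun x => Complex.ofRealCLM.hasDerivAt
  have d1 : ∀ x : ℝ, HasDerivAt (fun x : ℝ => (w : ℂ) * exp (w * x) / (exp w - 1) - 1 - w * (x - 1 / 2))
      (w ^ 2 / (exp w - 1) * exp (w * x) - w) x := by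
    intro x
    have := (((((d0 x).const_mul (w : ℂ)).div_const (exp w - 1)).sub_const 1).sub (((dl x).sub_const (1/2)).const_mul (w : ℂ)))
    convert! this using 1
    ring
  have d2 : ∀ x : ℝ, HasDerivAt (fun x : ℝ => (w : ℂ) ^ 2 / (exp w - 1) * exp (w * x) - w)
      (w ^ 3 / (exp w - 1) * exp (w * x)) x := by
    intro x
    have := ((d0 x).const_mul ((w : ℂ) ^ 2 / (exp w - 1))).sub_const (w : ℂ)
    convert! this using 1
    ring
  rcases eq_or_ne n 0 with rfl | hn
  · rw [fourierCoeffOn_eq_integral]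
    have : ∀ x : ℝ, HasDerivAt (fun x : ℝ => exp ((w : ℂ) * x) / (exp w - 1) - x - w * ((x : ℂ) ^ 2 / 2 - x / 2))
        ((w : ℂ) * exp (w * x) / (exp w - 1) - 1 - w * (x - 1 / 2)) x := by
      intro x
      have := (((d0 x).div_const (exp w - 1)).sub (dl x)).sub (((((dl x).pow 2).div_const 2).sub ((dl x).div_const 2)).const_mul (w : ℂ))
      convert! this using 1
      push_cast; ring
    have hI := intervalIntegral.integral_eq_sub_of_hasDerivAt (a := 0) (b := 1) (fun x _ => this x)
      ((Continuous.intervalIntegrable (by fun_prop) _ _))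
    simp only [neg_zero, fourier_zero, sub_zero, one_smul, hI]
    simp
    field_simp
    ring
  · have hq := HZq_ne hn
    have hqr : (HZq n).re = 0 := by simp [HZq]
    have hwq : (w : ℂ) - HZq n ≠ 0 := by
      intro h
      have := congrArg Complex.re h
      simp [hqr] at this
      exact hw.ne' this
    have c0 := fourierCoeffOn_of_hasDerivAt (zero_lt_one' ℝ) hn (fun x _ => d0 x)
      (Continuous.intervalIntegrable (by fun_prop) _ _)
    have c1 := fourierCoeffOn_of_hasDerivAt (zero_lt_one' ℝ) hn (fun x _ => d1 x)
      (Continuous.intervalIntegrable (by fun_prop) _ _)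
    have c2 := fourierCoeffOn_of_hasDerivAt (zero_lt_one' ℝ) hn (fun x _ => d2 x)
      (Continuous.intervalIntegrable (by fun_prop) _ _)
    rw [fourierCoeffOn.const_mul] at c0 c2
    rw [c1, c2]
    have hqq : -2 * (Real.pi : ℂ) * I * n = - HZq n := by rw [HZq]; ring
    rw [hqq] at c0 ⊢
    simp only [ofReal_zero, mul_zero, exp_zero, ofReal_one, mul_one, sub_zero, one_mul,
      QuotientAddGroup.mk_zero, fourier_eval_zero] at c0 ⊢
    set c := fourierCoeffOn (zero_lt_one' ℝ) (fun x : ℝ => exp ((w : ℂ) * x)) n with hc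
    have hc1 : c = (exp w - 1) / (w - HZq n) := by
      rw [eq_div_iff hwq]
      have : c * (- HZq n) = _ * (- HZq n) := congrArg (fun t => t * (- HZq n)) c0
      rw [show (1 / -HZq n * (exp ↑w - 1 - ↑w * c)) * -HZq n = (exp ↑w - 1 - ↑w * c) by field_simp] at this
      linear_combination this
    rw [hc1]
    generalize HZq n = q at *
    have hwq2 : 1 - (w:ℂ) / q ≠ 0 := by
      intro h; apply hwq; field_simp at h; linear_combination -h
    have hwq3 : q - (w:ℂ) ≠ 0 := by
      intro h; apply hwq; linear_combination -h
    field_simp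
    ring

lemma HZ_summ (a : ℕ) (ha : 1 ≤ a) : Summable (fun n : ℤ => (‖HZq n‖ ^ (a + 1))⁻¹) := by
  have := (Real.summable_one_div_int_pow (p := a + 1)).mpr (by omega)
  have h2 := (this.norm).mul_left (((2 * Real.pi) ^ (a+1))⁻¹)
  refine h2.congr fun n => ?_
  have : ‖HZq n‖ = 2 * Real.pi * |(n : ℝ)| := by
    simp [HZq, abs_of_pos Real.pi_pos]
  rw [this, mul_pow _ |(n:ℝ)|, mul_inv]; simp only [Real.norm_eq_abs, one_div, abs_inv, abs_pow]

lemma HZ_norm_one_sub (w : ℝ) (n : ℤ) : 1 ≤ ‖1 - (w : ℂ) / HZq n‖ := by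
  have : (1 - (w : ℂ) / HZq n).re = 1 := by
    simp [HZq, Complex.div_re]
  rw [← this]
  exact (le_abs_self _).trans (by rw [this]; simpa [this] using Complex.abs_re_le_norm (1 - (w : ℂ) / HZq n))

lemma HZ_F3 (y : ℝ) (hy0 : 0 ≤ y) (hy1 : y ≤ 1) (w : ℝ) (hw : 0 < w) :
    HasSum (fun n : ℤ => HZE y n * (-((w : ℂ) / HZq n) ^ 2 / (1 - w / HZq n)))
      ((w : ℂ) * exp (w * y) / (exp w - 1) - 1 - w * (y - 1 / 2)) := by
  have hE : exp (w : ℂ) - 1 ≠ 0 := by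
    have : 1 < Real.exp w := Real.one_lt_exp_iff.mpr hw
    rw [← Complex.ofReal_exp]
    norm_cast
    linarith
  set f : ℝ → ℂ := (fun x : ℝ => (w : ℂ) * exp (w * x) / (exp w - 1) - 1 - w * (x - 1 / 2)) with hf
  have hf01 : f 0 = f 1 := by
    simp [hf]; field_simp; ring
  have hfc : Continuous f := by rw [hf]; fun_prop
  let B : C(AddCircle (1 : ℝ), ℂ) := ⟨AddCircle.liftIco 1 0 f,
    AddCircle.liftIco_zero_continuous hf01 hfc.continuousOn⟩
  have hB : ∀ n : ℤ, fourierCoeff B n = -((w : ℂ) / HZq n) ^ 2 / (1 - w / HZq n) := by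
    intro n
    rw [← HZ_coeff w hw n, ContinuousMap.coe_mk, fourierCoeff_liftIco_eq]
    simp only [zero_add]
    rfl
  have hs : Summable (fourierCoeff B) := by
    refine Summable.of_norm_bounded ((HZ_summ 1 le_rfl).mul_left (w ^ 2)) fun n => ?_
    rw [hB, norm_div, norm_neg, norm_pow, norm_div]
    have := HZ_norm_one_sub w n
    rw [div_le_iff₀ (by linarith)]
    rw [Complex.norm_real, Real.norm_eq_abs, div_pow, sq_abs, div_eq_mul_inv]
    exact le_mul_of_one_le_right (by positivity) this
  have key : ∀ x ∈ Set.Ico (0:ℝ) 1, HasSum (fun n : ℤ => HZE x n * (-((w : ℂ) / HZq n) ^ 2 / (1 - w / HZq n))) (f x) := by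
    intro x hx
    have := has_pointwise_sum_fourier_series_of_summable hs (x : AddCircle (1:ℝ))
    have hBx : B (x : AddCircle (1:ℝ)) = f x := by
      show AddCircle.liftIco 1 0 f x = f x
      exact AddCircle.liftIco_coe_apply (by simpa using hx)
    rw [hBx] at this
    refine this.congr_fun ?_ |> fun h => h
    intro n
    rw [hB, smul_eq_mul, mul_comm]
  rcases hy1.lt_or_eq with h | rfl
  · exact key y ⟨hy0, h⟩
  · have := key 0 ⟨le_rfl, one_pos⟩
    rw [hf01] at this
    convert! this using 2 with n
    congr 1
    unfold HZE
    rw [AddCircle.coe_period, QuotientAddGroup.mk_zero]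

lemma HZ_F4 (y : ℝ) (hy0 : 0 ≤ y) (hy1 : y ≤ 1) (w : ℝ) (hw : 0 < w) (a : ℕ) :
    HasSum (fun n : ℤ => HZE y n * (-((w : ℂ) / HZq n) ^ (a + 2) / (1 - w / HZq n)))
      ((w : ℂ) * exp (w * y) / (exp w - 1) - ∑ n ∈ range (a + 2), (w : ℂ) ^ n * ((bernPoly n y : ℂ) / (n ! : ℂ))) := by
  induction a with
  | zero =>
    convert! HZ_F3 y hy0 hy1 w hw using 1
    simp [Finset.sum_range_succ, HZ_bern]
    ring
  | succ a ih =>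
    have := ih.add ((HZ_F1 y hy0 hy1 (a + 2) (by omega)).mul_left ((w : ℂ) ^ (a + 2)))
    convert! this using 1
    · ext n
      have h := HZ_norm_one_sub w n
      have h1 : 1 - (w : ℂ) / HZq n ≠ 0 := by
        intro h'; rw [h'] at h; simp at h; linarith
      rw [show (w : ℂ) ^ (a + 2) * (HZE y n / HZq n ^ (a + 2)) = HZE y n * ((w : ℂ) / HZq n) ^ (a + 2) by
        rw [div_pow]; ring]
      generalize (w : ℂ) / HZq n = u at *
      field_simp
      ring
    · rw [show a + 1 + 2 = (a + 2) + 1 by ring, Finset.sum_range_succ]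
      ring

lemma HZ_T0 (σ : ℝ) (hσ : 0 < σ) : Summable (fun k : ℕ => (k ! : ℝ) / risingProdR σ (k + 1)) := by
  obtain ⟨C, hC0, hC⟩ := HZ_gs σ hσ
  have h1 : Summable (fun n : ℕ => (n : ℝ) ^ (-1 - σ)) := Real.summable_nat_rpow.mpr (by linarith)
  have h2 := ((summable_nat_add_iff 1).mpr h1).mul_left C
  refine Summable.of_nonneg_of_le (fun k => ?_) (fun k => ?_) h2
  · have := HZ_rp_pos σ hσ (k+1); positivity
  · simpa using hC k

lemma HZ_T1 (z u : ℂ) (hz : 0 < z.re) (hu : u.re = 0) :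
    HasSum (fun k : ℕ => HZrise u (k + 1) / risingProd z (k + 1)) (u / (z - u)) := by
  have hzu : z - u ≠ 0 := by
    intro h; have := congrArg Complex.re h; simp [hu] at this; linarith
  have hb : ∀ k : ℕ, ‖HZrise u (k + 1) / risingProd z (k + 1)‖ ≤
      (‖u‖ * Real.exp (Real.pi * ‖u‖)) * ((k ! : ℝ) / risingProdR z.re (k + 1)) := by
    intro k
    have h1 := HZrise_le u hu k
    have h2 := HZ_rp_le z.re hz z le_rfl (k+1)
    have h3 := HZ_rp_pos z.re hz (k+1)
    rw [norm_div]
    calc _ ≤ (‖u‖ * k ! * Real.exp (Real.pi * ‖u‖)) / risingProdR z.re (k+1) := by gcongr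
      _ = _ := by ring
  have hs : Summable (fun k : ℕ => HZrise u (k + 1) / risingProd z (k + 1)) :=
    Summable.of_norm_bounded ((HZ_T0 z.re hz).mul_left _) hb
  rw [hs.hasSum_iff_tendsto_nat]
  have hsum : ∀ n : ℕ, ∑ k ∈ range n, HZrise u (k + 1) / risingProd z (k + 1) =
      u / (z - u) - HZrise u (n + 1) / risingProd z n / (z - u) := by
    intro n
    induction n with
    | zero => simp [HZrise, risingProd]
    | succ n ih =>
      rw [Finset.sum_range_succ, ih]
      have e1 : HZrise u (n + 1 + 1) = HZrise u (n + 1) * (u + (n + 1)) := by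
        rw [HZrise, Finset.prod_range_succ, ← HZrise]; push_cast; rfl
      have e2 : risingProd z (n + 1) = risingProd z n * (z + n + 1) := by
        rw [risingProd, Finset.prod_range_succ, ← risingProd]
      have n1 := HZ_rp_ne z hz n
      have n2 := HZ_rp_ne z hz (n+1)
      rw [e2] at n2 ⊢
      have n3 := (mul_ne_zero_iff.mp n2).2
      rw [e1]
      field_simp
      ring
  simp_rw [hsum]
  suffices h : Tendsto (fun n : ℕ => HZrise u (n + 1) / risingProd z n) atTop (𝓝 0) by
    simpa using (h.div_const (z - u)).const_sub (u / (z - u))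
  obtain ⟨C, hC0, hC⟩ := HZ_gs z.re hz
  have hlim : Tendsto (fun n : ℕ => (‖u‖ * Real.exp (Real.pi * ‖u‖)) * C * (‖z‖ + 1) * ((n : ℝ) + 1) ^ (- z.re)) atTop (𝓝 0) := by
    have := (tendsto_rpow_neg_atTop hz).comp (tendsto_atTop_add_const_right atTop (1:ℝ) tendsto_natCast_atTop_atTop)
    simpa using this.const_mul ((‖u‖ * Real.exp (Real.pi * ‖u‖)) * C * (‖z‖ + 1))
  refine squeeze_zero_norm (fun n => ?_) hlim
  have e2 : risingProd z (n + 1) = risingProd z n * (z + n + 1) := by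
    rw [risingProd, Finset.prod_range_succ, ← risingProd]
  have n2 := HZ_rp_ne z hz (n+1)
  have n1 := HZ_rp_ne z hz n
  have n3 : z + n + 1 ≠ 0 := by rw [e2] at n2; exact (mul_ne_zero_iff.mp n2).2
  have e3 : HZrise u (n + 1) / risingProd z n = HZrise u (n + 1) / risingProd z (n + 1) * (z + n + 1) := by
    rw [e2]; field_simp
  have hn : (0:ℝ) < (n:ℝ) + 1 := by positivity
  have hn1 : ‖z + n + 1‖ ≤ (‖z‖ + 1) * ((n:ℝ) + 1) := by
    have : ‖z + n + 1‖ ≤ ‖z‖ + n + 1 := by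
      refine (norm_add_le _ _).trans ?_
      rw [norm_one]; gcongr
      refine (norm_add_le _ _).trans ?_
      simp
    nlinarith [norm_nonneg z, (Nat.cast_nonneg n : (0:ℝ) ≤ n)]
  rw [e3, norm_mul]
  calc _ ≤ ((‖u‖ * Real.exp (Real.pi * ‖u‖)) * (C * ((n : ℝ) + 1) ^ (-1 - z.re))) * ((‖z‖ + 1) * ((n:ℝ) + 1)) := by
        refine mul_le_mul ((hb n).trans ?_) hn1 (norm_nonneg _) (by positivity)
        exact mul_le_mul_of_nonneg_left (hC n) (by positivity)
    _ = _ := by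
        rw [show -1 - z.re = -z.re - 1 by ring, Real.rpow_sub_one hn.ne']
        field_simp

abbrev HZP (y : ℝ) (a : ℕ) (v : ℝ) (k : ℕ) : ℂ :=
  HZd (fun l => (v : ℂ) ^ l * ((bernPoly (l + a) y : ℂ) / ((l + a)! : ℂ))) (k + 1)

lemma HZ_fB (y : ℝ) (a : ℕ) (v : ℝ) (hv : 0 < v) (k : ℕ) (n : ℤ) :
    ‖-(HZE y n / HZq n ^ (a + 1) * HZrise (v / HZq n) (k + 1))‖ ≤
      (‖HZq n‖ ^ (a + 1 + 1))⁻¹ * (v * Real.exp (v / 2) * k !) := by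
  rcases eq_or_ne n 0 with rfl | hn
  · simp
  have hre : ((v : ℂ) / HZq n).re = 0 := by simp [HZq, Complex.div_re]
  have hnv : ‖(v : ℂ) / HZq n‖ = v / ‖HZq n‖ := by
    rw [norm_div, Complex.norm_real, Real.norm_eq_abs, abs_of_pos hv]
  have h := HZrise_le ((v : ℂ) / HZq n) hre k
  rw [hnv] at h
  have hq : 2 * Real.pi ≤ ‖HZq n‖ := by
    have : ‖HZq n‖ = 2 * Real.pi * |(n : ℝ)| := by
      simp [HZq, abs_of_pos Real.pi_pos]
    rw [this]
    have h1 : (1:ℝ) ≤ |(n:ℝ)| := by exact_mod_cast Int.one_le_abs hn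
    exact le_mul_of_one_le_right (by positivity) h1
  have hq0 : 0 < ‖HZq n‖ := lt_of_lt_of_le (by positivity) hq
  have hexp : Real.exp (Real.pi * (v / ‖HZq n‖)) ≤ Real.exp (v / 2) := by
    apply Real.exp_le_exp.mpr
    rw [mul_div_assoc', div_le_div_iff₀ hq0 two_pos]
    nlinarith
  rw [norm_neg, norm_mul, norm_div, HZE_norm, norm_pow]
  calc _ ≤ 1 / ‖HZq n‖ ^ (a + 1) * (v / ‖HZq n‖ * k ! * Real.exp (v / 2)) := by
        refine mul_le_mul_of_nonneg_left (h.trans ?_) (by positivity)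
        exact mul_le_mul_of_nonneg_left hexp (by positivity)
    _ = _ := by rw [pow_succ _ (a+1)]; field_simp

def HZC (a : ℕ) : ℝ := ∑' n : ℤ, (‖HZq n‖ ^ (a + 1 + 1))⁻¹

lemma HZC_nonneg (a : ℕ) : 0 ≤ HZC a := tsum_nonneg fun _ => by positivity

lemma HZP_le (y : ℝ) (hy0 : 0 ≤ y) (hy1 : y ≤ 1) (a : ℕ) (v : ℝ) (hv : 0 < v) (k : ℕ) :
    ‖HZP y (a + 1) v k‖ ≤ HZC a * (v * Real.exp (v / 2) * k !) := by
  rw [HZP, ← (HZ_F2 y hy0 hy1 (a + 1) (by omega) v k).tsum_eq]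
  refine tsum_of_norm_bounded ?_ (HZ_fB y a v hv k)
  exact (HZ_summ (a + 1) (by omega)).hasSum.mul_right _

lemma HZ_I3 (y : ℝ) (hy0 : 0 ≤ y) (hy1 : y ≤ 1) (a : ℕ) (v : ℝ) (hv : 0 < v) (x : ℝ) (hx : 0 < x) :
    HasSum (fun k : ℕ => HZP y (a + 1) v k / risingProd x (k + 1))
      ((((v / x : ℝ) : ℂ) * exp ((v / x : ℝ) * y) / (exp (v / x : ℝ) - 1)
        - ∑ n ∈ range (a + 2), ((v / x : ℝ) : ℂ) ^ n * ((bernPoly n y : ℂ) / (n ! : ℂ))) / ((v / x : ℝ) : ℂ) ^ (a + 1)) := by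
  have hx' : 0 < (x : ℂ).re := by simpa using hx
  set w : ℝ := v / x with hw
  have hwpos : 0 < w := by positivity
  set f : ℤ × ℕ → ℂ := fun p => -(HZE y p.1 / HZq p.1 ^ (a + 1) * HZrise (v / HZq p.1) (p.2 + 1)) / risingProd x (p.2 + 1) with hf
  have hfs : Summable f := by
    have h1 := (HZ_summ (a + 1) (by omega)).mul_of_nonneg ((HZ_T0 x hx).mul_left (v * Real.exp (v / 2)))
      (fun n => by positivity) (fun k => by
        have := HZ_rp_pos x hx (k+1)
        simp only [Pi.zero_apply]; positivity)
    refine Summable.of_norm_bounded h1 fun p => ?_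
    have h2 := HZ_rp_le x hx (x : ℂ) (by simp) (p.2+1)
    have h3 := HZ_rp_pos x hx (p.2+1)
    have h4 := HZ_fB y a v hv p.2 p.1
    simp only [hf]
    rw [norm_div]
    calc _ ≤ (‖HZq p.1‖ ^ (a + 1 + 1))⁻¹ * (v * Real.exp (v / 2) * p.2 !) / risingProdR x (p.2+1) := by gcongr
      _ = _ := by ring
  have h1 : HasSum (fun n : ℤ => HZE y n * (-((w : ℂ) / HZq n) ^ (a + 2) / (1 - w / HZq n)) / (w : ℂ) ^ (a + 1)) (∑' p, f p) := by
    refine hfs.hasSum.prod_fiberwise fun n => ?_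
    have hre : ((v : ℂ) / HZq n).re = 0 := by simp [HZq, Complex.div_re]
    have := (HZ_T1 x ((v : ℂ) / HZq n) hx' hre).mul_left (-(HZE y n / HZq n ^ (a + 1)))
    convert! this using 1
    · ext k; simp only [hf]; ring
    · rcases eq_or_ne n 0 with rfl | hn
      · simp [HZq]
      have hq := HZq_ne hn
      have h := HZ_norm_one_sub w n
      have h1 : 1 - (w : ℂ) / HZq n ≠ 0 := by
        intro h'; rw [h'] at h; simp at h; linarith
      have hwc : (w : ℂ) ≠ 0 := by exact_mod_cast hwpos.ne'
      have hxc : (x : ℂ) ≠ 0 := by exact_mod_cast hx.ne'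
      have hv' : (v : ℂ) = w * x := by rw [hw]; push_cast; field_simp
      rw [hv']
      have e : (x : ℂ) - w * x / HZq n = x * (1 - w / HZq n) := by ring
      rw [e]
      generalize HZq n = q at *
      rw [div_pow]
      field_simp
      try ring
  have h2 := HZ_F4 y hy0 hy1 w hwpos a
  have h3 := h2.div_const ((w : ℂ) ^ (a + 1))
  rw [h3.unique h1]
  have hs2 : HasSum (f ∘ (Equiv.prodComm ℕ ℤ)) (∑' p, f p) :=
    (Equiv.prodComm ℕ ℤ).hasSum_iff.mpr hfs.hasSum
  have hk : ∀ k : ℕ, HasSum (fun n : ℤ => (f ∘ (Equiv.prodComm ℕ ℤ)) (k, n)) (HZP y (a + 1) v k / risingProd x (k + 1)) := by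
    intro k
    have h5 := (HZ_F2 y hy0 hy1 (a + 1) (by omega) v k).div_const (risingProd x (k + 1))
    exact h5
  exact HasSum.prod_fiberwise hs2 hk

abbrev HZβ (s : ℂ) (y : ℝ) (a l : ℕ) : ℂ :=
  (-1) ^ (l + a) * cchoose (1 - s) (l + a) * (bernPoly (l + a) y : ℂ)

abbrev HZK (μ : ℂ) (v : ℝ) : ℂ := (Real.exp (-v) : ℂ) * (v : ℂ) ^ (μ - 1)

lemma HZ_gam_ne (s : ℂ) (hs : 1 < s.re) : Complex.Gamma (s - 1) ≠ 0 :=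
  Complex.Gamma_ne_zero_of_re_pos (by simp; linarith)

lemma HZ_gam (s : ℂ) (hs : 1 < s.re) (n : ℕ) :
    Complex.Gamma (s - 1 + n) = (-1) ^ n * cchoose (1 - s) n * n ! * Complex.Gamma (s - 1) := by
  have hc : ∀ n : ℕ, cchoose (1 - s) n * n ! = ∏ i ∈ range n, (1 - s - i) := by
    intro n
    rw [cchoose]; exact div_mul_cancel₀ _ (by exact_mod_cast Nat.factorial_ne_zero n)
  rw [mul_assoc ((-1) ^ n), hc]
  induction n with
  | zero => simp
  | succ n ih =>
    have hne : s - 1 + n ≠ 0 := by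
      intro h; have := congrArg Complex.re h; simp at this
      have h2 : (0:ℝ) ≤ n := Nat.cast_nonneg n
      linarith
    have := Complex.Gamma_add_one (s - 1 + n) hne
    rw [show s - 1 + ((n + 1 : ℕ) : ℂ) = s - 1 + n + 1 by push_cast; ring, this, ih, Finset.prod_range_succ]
    ring

lemma HZK_int (μ : ℂ) (hμ : 0 < μ.re) (l : ℕ) :
    IntegrableOn (fun v : ℝ => HZK μ v * (v : ℂ) ^ l) (Set.Ioi 0) ∧
    ∫ v in Set.Ioi (0:ℝ), HZK μ v * (v : ℂ) ^ l = Complex.Gamma (μ + l) := by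
  have hμ' : 0 < (μ + l).re := by
    simp; have h2 : (0:ℝ) ≤ l := Nat.cast_nonneg l
    linarith
  have he : Set.EqOn (fun v : ℝ => (Real.exp (-v) : ℂ) * (v : ℂ) ^ (μ + l - 1)) (fun v : ℝ => HZK μ v * (v : ℂ) ^ l) (Set.Ioi 0) := by
    intro v hv
    have hv' : (v : ℂ) ≠ 0 := by exact_mod_cast (ne_of_gt hv)
    simp only [HZK]
    have h1 : (v : ℂ) ^ (μ + l - 1) = (v : ℂ) ^ (μ - 1) * (v : ℂ) ^ l := by
      rw [← Complex.cpow_natCast, ← Complex.cpow_add _ _ hv']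
      congr 1; ring
    rw [h1, mul_assoc]
  constructor
  · exact (Complex.GammaIntegral_convergent hμ').congr_fun he measurableSet_Ioi
  · rw [← setIntegral_congr_fun measurableSet_Ioi he, Complex.Gamma_eq_integral hμ']
    rfl

lemma HZ_I1 (s : ℂ) (hs : 1 < s.re) (y : ℝ) (a k : ℕ) :
    IntegrableOn (fun v : ℝ => HZK (s - 1 + a) v * HZP y a v k) (Set.Ioi 0) ∧
    ∫ v in Set.Ioi (0:ℝ), HZK (s - 1 + a) v * HZP y a v k =
      HZd (HZβ s y a) (k + 1) * Complex.Gamma (s - 1) := by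
  have hμ : 0 < (s - 1 + a).re := by
    simp; have h2 : (0:ℝ) ≤ a := Nat.cast_nonneg a
    linarith
  have he : (fun v : ℝ => HZK (s - 1 + a) v * HZP y a v k) = fun v : ℝ =>
      ∑ l ∈ Icc 1 (k + 1), ((stirling1Unsigned (k+1) l : ℂ) * ((bernPoly (l + a) y : ℂ) / ((l + a)! : ℂ))) *
        (HZK (s - 1 + a) v * (v : ℂ) ^ l) := by
    ext v
    rw [HZP, HZd, Finset.mul_sum]
    refine Finset.sum_congr rfl fun l _ => by ring
  have hi : ∀ l ∈ Icc 1 (k + 1), Integrable (fun v : ℝ => ((stirling1Unsigned (k+1) l : ℂ) * ((bernPoly (l + a) y : ℂ) / ((l + a)! : ℂ))) *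
        (HZK (s - 1 + a) v * (v : ℂ) ^ l)) (volume.restrict (Set.Ioi 0)) :=
    fun l _ => ((HZK_int _ hμ l).1).const_mul _
  rw [he]
  refine ⟨integrable_finsetSum _ hi, ?_⟩
  rw [integral_finsetSum _ hi, HZd, Finset.sum_mul]
  refine Finset.sum_congr rfl fun l _ => ?_
  rw [integral_const_mul, (HZK_int _ hμ l).2]
  have := HZ_gam s hs (l + a)
  rw [show s - 1 + (a : ℂ) + l = s - 1 + ((l + a : ℕ) : ℂ) by push_cast; ring, this, HZβ]
  have hf : ((l + a)! : ℂ) ≠ 0 := by exact_mod_cast Nat.factorial_ne_zero _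
  field_simp

lemma HZ_I2 (s : ℂ) (hs : 1 < s.re) (y : ℝ) (hy0 : 0 ≤ y) (hy1 : y ≤ 1) (a : ℕ) :
    ∃ M : ℝ, 0 ≤ M ∧ ∀ k : ℕ, ∫ v in Set.Ioi (0:ℝ), ‖HZK (s - 1 + (a + 1 : ℕ)) v * HZP y (a + 1) v k‖ ≤ M * k ! := by
  have hint : IntegrableOn (fun v : ℝ => v ^ (s.re + a) * Real.exp (-(1/2) * v ^ (1:ℝ))) (Set.Ioi 0) :=
    integrableOn_rpow_mul_exp_neg_mul_rpow
      (by have h2 : (0:ℝ) ≤ a := Nat.cast_nonneg a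
          linarith) one_pos (by norm_num)
  set J := ∫ v in Set.Ioi (0:ℝ), v ^ (s.re + a) * Real.exp (-(1/2) * v ^ (1:ℝ)) with hJ
  have hJ0 : 0 ≤ J := setIntegral_nonneg measurableSet_Ioi fun v hv => by
    have : (0:ℝ) < v := hv
    positivity
  refine ⟨HZC a * J, mul_nonneg (HZC_nonneg a) hJ0, fun k => ?_⟩
  have hC := HZC_nonneg a
  calc _ ≤ ∫ v in Set.Ioi (0:ℝ), (HZC a * k !) * (v ^ (s.re + a) * Real.exp (-(1/2) * v ^ (1:ℝ))) := by
        refine setIntegral_mono_on (HZ_I1 s hs y (a+1) k).1.norm (hint.const_mul _) measurableSet_Ioi fun v hv => ?_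
        have hv' : (0:ℝ) < v := hv
        have h := HZP_le y hy0 hy1 a v hv' k
        rw [norm_mul, norm_mul, Complex.norm_cpow_eq_rpow_re_of_pos hv', Complex.norm_real, Real.norm_eq_abs, abs_of_pos (Real.exp_pos _)]
        have e1 : (s - 1 + ((a + 1 : ℕ) : ℂ) - 1).re = s.re + a - 1 := by simp; try ring
        rw [e1]
        calc _ ≤ Real.exp (-v) * v ^ (s.re + a - 1) * (HZC a * (v * Real.exp (v / 2) * k !)) := by gcongr
          _ = _ := by
            rw [Real.rpow_sub_one hv'.ne', Real.rpow_one, show -(1/2) * v = -v + v / 2 by ring, Real.exp_add]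
            field_simp
    _ = _ := by rw [integral_const_mul]; ring

lemma HZ_dbound (s : ℂ) (hs : 1 < s.re) (y : ℝ) (hy0 : 0 ≤ y) (hy1 : y ≤ 1) (a : ℕ) :
    ∃ D : ℝ, 0 ≤ D ∧ ∀ k : ℕ, ‖HZd (HZβ s y (a + 1)) (k + 1)‖ ≤ D * k ! := by
  obtain ⟨M, hM0, hM⟩ := HZ_I2 s hs y hy0 hy1 a
  have hg := HZ_gam_ne s hs
  refine ⟨M / ‖Complex.Gamma (s - 1)‖, by positivity, fun k => ?_⟩
  have h := (norm_integral_le_integral_norm _).trans (hM k)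
  rw [(HZ_I1 s hs y (a+1) k).2, norm_mul] at h
  rw [div_mul_eq_mul_div, le_div_iff₀ (norm_pos_iff.mpr hg)]
  exact h

abbrev HZG (y : ℝ) (w : ℝ) : ℂ := (w : ℂ) * exp (w * y) / (exp w - 1)

lemma HZ_S (s : ℂ) (hs : 1 < s.re) (y : ℝ) (hy0 : 0 ≤ y) (hy1 : y ≤ 1) (a : ℕ) (x : ℝ) (hx : 0 < x) :
    HasSum (fun k : ℕ => HZd (HZβ s y (a + 1)) (k + 1) * Complex.Gamma (s - 1) / risingProd x (k + 1))
      (∫ v in Set.Ioi (0:ℝ), HZK (s - 1 + (a + 1 : ℕ)) v * ((HZG y (v / x)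
        - ∑ n ∈ range (a + 2), ((v / x : ℝ) : ℂ) ^ n * ((bernPoly n y : ℂ) / (n ! : ℂ))) / ((v / x : ℝ) : ℂ) ^ (a + 1))) := by
  obtain ⟨M, hM0, hM⟩ := HZ_I2 s hs y hy0 hy1 a
  have hF : ∀ k : ℕ, Integrable (fun v : ℝ => (HZK (s - 1 + (a + 1 : ℕ)) v * HZP y (a + 1) v k) / risingProd x (k + 1))
      (volume.restrict (Set.Ioi 0)) := fun k => (HZ_I1 s hs y (a+1) k).1.div_const _
  have hsum : Summable (fun k : ℕ => ∫ v in Set.Ioi (0:ℝ), ‖(HZK (s - 1 + (a + 1 : ℕ)) v * HZP y (a + 1) v k) / risingProd x (k + 1)‖) := by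
    refine Summable.of_nonneg_of_le (fun k => integral_nonneg fun v => norm_nonneg _) (fun k => ?_) ((HZ_T0 x hx).mul_left M)
    simp_rw [norm_div]
    rw [integral_div]
    have h2 := HZ_rp_le x hx (x : ℂ) (by simp) (k+1)
    have h3 := HZ_rp_pos x hx (k+1)
    rw [← mul_div_assoc]
    have h4 : 0 ≤ ∫ v in Set.Ioi (0:ℝ), ‖HZK (s - 1 + (a + 1 : ℕ)) v * HZP y (a + 1) v k‖ :=
      integral_nonneg fun v => norm_nonneg _
    exact div_le_div₀ (by positivity) (hM k) h3 h2
  have h := hasSum_integral_of_summable_integral_norm hF hsum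
  convert! h using 1
  · ext k
    rw [integral_div, (HZ_I1 s hs y (a+1) k).2]
  · refine setIntegral_congr_fun measurableSet_Ioi fun v hv => ?_
    have := (HZ_I3 y hy0 hy1 a v hv x hx).mul_left (HZK (s - 1 + (a + 1 : ℕ)) v)
    rw [← this.tsum_eq]
    exact tsum_congr fun k => by ring

lemma HZ_mel (s : ℂ) (hs : 1 < s.re) (y : ℝ) (hy1 : y ≤ 1) (x : ℝ) (hx : 0 < x) :
    Complex.Gamma s * ∑' k : ℕ, ((k : ℂ) + x + 1 - y) ^ (-s) =
      ∫ w in Set.Ioi (0:ℝ), (Real.exp (-(x * w)) : ℂ) * (w : ℂ) ^ (s - 2) * HZG y w := by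
  have hp : ∀ k : ℕ, 0 < (k : ℝ) + (x + 1 - y) := by
    intro k
    have h2 : (0:ℝ) ≤ k := Nat.cast_nonneg k
    linarith
  have h := hasSum_mellin (a := fun _ : ℕ => (1 : ℂ)) (p := fun k : ℕ => (k : ℝ) + (x + 1 - y))
    (F := fun t : ℝ => (Real.exp (-(x * t)) : ℂ) * exp (t * y) / (exp t - 1)) (s := s)
    (fun k => Or.inr (hp k)) (by linarith) ?_ ?_
  · rw [← tsum_mul_left]
    have h2 := h.tsum_eq
    rw [mellin] at h2
    convert! h2 using 1
    · refine tsum_congr fun k => ?_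
      rw [Complex.cpow_neg]
      push_cast
      rw [show (k : ℂ) + (x + 1 - y) = (k : ℂ) + x + 1 - y by ring]
      ring
    · refine setIntegral_congr_fun measurableSet_Ioi fun w hw => ?_
      have hw' : (w : ℂ) ≠ 0 := by exact_mod_cast (ne_of_gt hw)
      simp only [HZG, smul_eq_mul]
      rw [show s - 1 = s - 2 + 1 by ring, Complex.cpow_add _ _ hw', Complex.cpow_one]
      ring
  · intro t ht
    have ht' : (0:ℝ) < t := ht
    have hg : HasSum (fun k : ℕ => (Real.exp (-t)) ^ k) (1 - Real.exp (-t))⁻¹ :=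
      hasSum_geometric_of_lt_one (Real.exp_pos _).le (by simpa using ht')
    have hg2 := (hg.mul_left (Real.exp (-((x + 1 - y) * t))))
    have hg3 := Complex.ofRealCLM.hasSum hg2
    have hne : Real.exp t - 1 ≠ 0 := by
      have : 1 < Real.exp t := Real.one_lt_exp_iff.mpr ht'
      linarith
    convert! hg3 using 1
    · ext k
      simp only [one_mul, Function.comp, Complex.ofRealCLM_apply]
      rw [← Real.exp_nat_mul, ← Real.exp_add]
      congr 2; ring
    · simp only [Complex.ofRealCLM_apply]
      have : Real.exp (-((x + 1 - y) * t)) * (1 - Real.exp (-t))⁻¹ = Real.exp (-(x*t)) * Real.exp (t * y) / (Real.exp t - 1) := by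
        rw [show -((x + 1 - y) * t) = -(x * t) + t * y + (-t) by ring, Real.exp_add, Real.exp_add, Real.exp_neg t]
        have : Real.exp t ≠ 0 := (Real.exp_pos t).ne'
        have h1 : 1 - (Real.exp t)⁻¹ ≠ 0 := by
          intro h; apply hne; field_simp at h; linarith
        field_simp
      rw [this]
      push_cast
      rfl
  · have := (Real.summable_one_div_nat_add_rpow (x + 1 - y) s.re).mpr hs
    refine this.congr fun k => ?_
    rw [abs_of_pos (hp k)]; simp

lemma HZ_Gle (y : ℝ) (hy1 : y ≤ 1) (w : ℝ) (hw : 0 < w) : ‖HZG y w‖ ≤ w + 1 := by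
  have h1 : 1 < Real.exp w := Real.one_lt_exp_iff.mpr hw
  have e : HZG y w = ((w * Real.exp (w * y) / (Real.exp w - 1) : ℝ) : ℂ) := by
    simp only [HZG]; push_cast; rfl
  rw [e, Complex.norm_real, Real.norm_eq_abs, abs_of_nonneg (by
    have : 0 < Real.exp w - 1 := by linarith
    positivity), div_le_iff₀ (by linarith)]
  have h2 : Real.exp (w * y) ≤ Real.exp w := Real.exp_le_exp.mpr (by nlinarith)
  have h3 := Real.add_one_le_exp w
  nlinarith

lemma HZ_Gint (s : ℂ) (hs : 1 < s.re) (y : ℝ) (hy1 : y ≤ 1) (x : ℝ) (hx : 0 < x) :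
    IntegrableOn (fun v : ℝ => HZK (s - 1) v * HZG y (v / x)) (Set.Ioi 0) := by
  have hμ : 0 < (s - 1).re := by simp; linarith
  have h0 := (HZK_int (s - 1) hμ 0).1.norm
  have h1 := (HZK_int (s - 1) hμ 1).1.norm
  have h2 := (h1.const_mul x⁻¹).add h0
  refine Integrable.mono' h2 ?_ ?_
  · refine ContinuousOn.aestronglyMeasurable ?_ measurableSet_Ioi
    intro v hv
    have hv' : (0:ℝ) < v := hv
    have hvx : 0 < v / x := by positivity
    have hne : exp ((v / x : ℝ) : ℂ) - 1 ≠ 0 := by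
      have : 1 < Real.exp (v / x) := Real.one_lt_exp_iff.mpr hvx
      rw [← Complex.ofReal_exp]
      exact_mod_cast (by linarith : Real.exp (v / x) - 1 ≠ 0) |> fun h => h
    refine ContinuousAt.continuousWithinAt ?_
    have c1 : ContinuousAt (fun v : ℝ => (v : ℂ) ^ (s - 1 - 1)) v :=
      (continuousAt_ofReal_cpow_const _ _ (Or.inr hv'.ne'))
    have c2 : ContinuousAt (fun v : ℝ => ((v / x : ℝ) : ℂ)) v := by fun_prop
    simp only [HZK, HZG]
    refine ContinuousAt.mul (ContinuousAt.mul (by fun_prop) c1) (ContinuousAt.div (by fun_prop) (by fun_prop) hne)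
  · refine (ae_restrict_iff' measurableSet_Ioi).mpr (Eventually.of_forall fun v hv => ?_)
    have hv' : (0:ℝ) < v := hv
    have hvx : 0 < v / x := by positivity
    have h := HZ_Gle y hy1 (v / x) hvx
    simp only [Pi.add_apply, pow_one, pow_zero, mul_one, norm_mul (HZK _ _)]
    rw [Complex.norm_real v, Real.norm_eq_abs, abs_of_pos hv']
    calc _ ≤ ‖HZK (s - 1) v‖ * (v / x + 1) := by gcongr
      _ = _ := by ring

abbrev HZF (s : ℂ) (y : ℝ) (z : ℂ) : ℂ := ∑' k : ℕ, ((k : ℂ) + z + 1 - y) ^ (-s)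

abbrev HZL (s : ℂ) (y : ℝ) (a : ℕ) (z : ℂ) : ℂ :=
  z ^ (a + 1) * (z ^ (s - 1) * ((s - 1) * HZF s y z) - ∑ n ∈ range (a + 2), HZβ s y 0 n / z ^ n)

abbrev HZSS (s : ℂ) (y : ℝ) (a : ℕ) (z : ℂ) : ℂ :=
  ∑' k : ℕ, HZd (HZβ s y (a + 1)) (k + 1) / risingProd z (k + 1)

lemma HZ_mel2 (s : ℂ) (hs : 1 < s.re) (y : ℝ) (hy1 : y ≤ 1) (x : ℝ) (hx : 0 < x) :
    ∫ v in Set.Ioi (0:ℝ), HZK (s - 1) v * HZG y (v / x) =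
      (x : ℂ) ^ (s - 1) * (Complex.Gamma s * HZF s y x) := by
  have hxc : (x : ℂ) ≠ 0 := by exact_mod_cast hx.ne'
  have h := integral_comp_mul_left_Ioi (fun v : ℝ => HZK (s - 1) v * HZG y (v / x)) 0 hx
  rw [mul_zero] at h
  have h2 : ∫ v in Set.Ioi (0:ℝ), HZK (s - 1) v * HZG y (v / x) =
      (x : ℂ) * ∫ w in Set.Ioi (0:ℝ), HZK (s - 1) (x * w) * HZG y (x * w / x) := by
    rw [h, Complex.real_smul, Complex.ofReal_inv, ← mul_assoc, mul_inv_cancel₀ hxc, one_mul]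
  rw [h2, HZF, HZ_mel s hs y hy1 x hx, ← integral_const_mul, ← integral_const_mul]
  refine setIntegral_congr_fun measurableSet_Ioi fun w hw => ?_
  have hw' : (0:ℝ) < w := hw
  simp only [HZK]
  rw [mul_div_cancel_left₀ w hx.ne', Complex.ofReal_mul, Complex.mul_cpow_ofReal_nonneg hx.le hw'.le,
    show s - 1 - 1 = s - 2 by ring, show s - 1 = s - 2 + 1 by ring, Complex.cpow_add _ _ hxc, Complex.cpow_one]
  ring

lemma HZ_R (s : ℂ) (hs : 1 < s.re) (y : ℝ) (hy0 : 0 ≤ y) (hy1 : y ≤ 1) (a : ℕ) (x : ℝ) (hx : 0 < x) :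
    HZL s y a x = HZSS s y a x := by
  have hg := HZ_gam_ne s hs
  have hμ : 0 < (s - 1).re := by simp; linarith
  have hxc : (x : ℂ) ≠ 0 := by exact_mod_cast hx.ne'
  have h := (HZ_S s hs y hy0 hy1 a x hx).tsum_eq
  have e1 : ∀ k : ℕ, HZd (HZβ s y (a + 1)) (k + 1) * Complex.Gamma (s - 1) / risingProd x (k + 1)
      = HZd (HZβ s y (a + 1)) (k + 1) / risingProd x (k + 1) * Complex.Gamma (s - 1) := fun k => by ring
  simp_rw [e1] at h
  rw [tsum_mul_right] at h
  have hI : ∀ n ∈ range (a + 2), Integrable (fun v : ℝ => ((bernPoly n y : ℂ) / (n ! : ℂ) / (x:ℂ) ^ n) * (HZK (s - 1) v * (v : ℂ) ^ n))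
      (volume.restrict (Set.Ioi 0)) := fun n _ => ((HZK_int _ hμ n).1).const_mul _
  have e2 : Set.EqOn (fun v : ℝ => HZK (s - 1 + (a + 1 : ℕ)) v * ((HZG y (v / x)
        - ∑ n ∈ range (a + 2), ((v / x : ℝ) : ℂ) ^ n * ((bernPoly n y : ℂ) / (n ! : ℂ))) / ((v / x : ℝ) : ℂ) ^ (a + 1)))
      (fun v : ℝ => (x : ℂ) ^ (a + 1) * (HZK (s - 1) v * HZG y (v / x) -
        ∑ n ∈ range (a + 2), ((bernPoly n y : ℂ) / (n ! : ℂ) / (x:ℂ) ^ n) * (HZK (s - 1) v * (v : ℂ) ^ n))) (Set.Ioi 0) := by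
    intro v hv
    have hv' : (v : ℂ) ≠ 0 := by exact_mod_cast (ne_of_gt hv)
    have h1 : HZK (s - 1 + (a + 1 : ℕ)) v = HZK (s - 1) v * (v : ℂ) ^ (a + 1) := by
      simp only [HZK]
      rw [mul_assoc, ← Complex.cpow_natCast, ← Complex.cpow_add _ _ hv']
      congr 2; push_cast; ring
    have h2 : ∑ n ∈ range (a + 2), ((bernPoly n y : ℂ) / (n ! : ℂ) / (x:ℂ) ^ n) * (HZK (s - 1) v * (v : ℂ) ^ n)
        = HZK (s - 1) v * ∑ n ∈ range (a + 2), ((v / x : ℝ) : ℂ) ^ n * ((bernPoly n y : ℂ) / (n ! : ℂ)) := by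
      rw [Finset.mul_sum]
      refine Finset.sum_congr rfl fun n _ => ?_
      rw [Complex.ofReal_div, div_pow]
      ring
    simp only
    rw [h1, h2, ← mul_sub, Complex.ofReal_div, div_pow]
    have := pow_ne_zero (a + 1) hv'
    field_simp
  rw [setIntegral_congr_fun measurableSet_Ioi e2, integral_const_mul,
    integral_sub (HZ_Gint s hs y hy1 x hx) (integrable_finsetSum _ hI), HZ_mel2 s hs y hy1 x hx,
    integral_finsetSum _ hI] at h
  have e3 : ∑ n ∈ range (a + 2), ∫ v in Set.Ioi (0:ℝ), ((bernPoly n y : ℂ) / (n ! : ℂ) / (x:ℂ) ^ n) * (HZK (s - 1) v * (v : ℂ) ^ n)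
      = (∑ n ∈ range (a + 2), HZβ s y 0 n / (x : ℂ) ^ n) * Complex.Gamma (s - 1) := by
    rw [Finset.sum_mul]
    refine Finset.sum_congr rfl fun n _ => ?_
    rw [integral_const_mul, (HZK_int _ hμ n).2, HZ_gam s hs n]
    have hf : (n ! : ℂ) ≠ 0 := by exact_mod_cast Nat.factorial_ne_zero _
    simp only [HZβ, add_zero]
    field_simp
  have e4 : Complex.Gamma s = (s - 1) * Complex.Gamma (s - 1) := by
    have := Complex.Gamma_add_one (s - 1) (by intro h; rw [h] at hμ; simp at hμ)
    rwa [sub_add_cancel] at this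
  rw [e3, e4] at h
  apply mul_right_cancel₀ hg
  rw [HZSS, h, HZL]
  ring

lemma HZ_Fdiff (s : ℂ) (hs : 1 < s.re) (y : ℝ) (hy1 : y ≤ 1) (ε : ℝ) (hε : 0 < ε) :
    DifferentiableOn ℂ (HZF s y) {z : ℂ | ε < z.re} := by
  have hU : IsOpen {z : ℂ | ε < z.re} := isOpen_lt continuous_const Complex.continuous_re
  have hsum : Summable (fun k : ℕ => ((k : ℝ) + ε) ^ (-s.re) * Real.exp (Real.pi * |s.im|)) := by
    refine Summable.mul_right _ ?_
    have := (Real.summable_one_div_nat_add_rpow ε s.re).mpr hs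
    refine this.congr fun k => ?_
    rw [abs_of_pos (by positivity), Real.rpow_neg (by positivity), one_div]
  have hre : ∀ (k : ℕ) (z : ℂ), z ∈ {z : ℂ | ε < z.re} → (k : ℝ) + ε ≤ ((k : ℂ) + z + 1 - y).re := by
    intro k z hz
    have : ε < z.re := hz
    simp; linarith
  have hp : ∀ k : ℕ, 0 < (k : ℝ) + ε := fun k => by positivity
  refine Complex.differentiableOn_tsum_of_summable_norm hsum (fun k => ?_) hU fun k z hz => ?_
  · intro z hz
    have h1 := hre k z hz
    have h2 := hp k
    refine DifferentiableAt.differentiableWithinAt ?_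
    refine DifferentiableAt.cpow (by fun_prop) (by fun_prop) (Or.inl (by linarith))
  · have h1 := hre k z hz
    have h2 := hp k
    set w := (k : ℂ) + z + 1 - y with hw
    have h3 : (k : ℝ) + ε ≤ ‖w‖ := h1.trans (Complex.re_le_norm _)
    refine (Complex.norm_cpow_le w (-s)).trans ?_
    rw [div_eq_mul_inv, ← Real.exp_neg]
    refine mul_le_mul ?_ ?_ (Real.exp_pos _).le (by positivity)
    · rw [Complex.neg_re]
      exact Real.rpow_le_rpow_of_nonpos h2 h3 (by linarith)
    · refine Real.exp_le_exp.mpr ?_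
      rw [Complex.neg_im, mul_neg, neg_neg]
      calc _ ≤ |w.arg * s.im| := le_abs_self _
        _ = |w.arg| * |s.im| := abs_mul _ _
        _ ≤ _ := by gcongr; exact Complex.abs_arg_le_pi w

lemma HZ_Sbound (D : ℝ) (d : ℂ) (k : ℕ) (hd : ‖d‖ ≤ D * k !) (ε : ℝ) (hε : 0 < ε) (z : ℂ) (hz : ε ≤ z.re) :
    ‖d / risingProd z (k + 1)‖ ≤ D * ((k ! : ℝ) / risingProdR ε (k + 1)) := by
  rw [norm_div, ← mul_div_assoc]
  exact div_le_div₀ ((norm_nonneg _).trans hd) hd (HZ_rp_pos ε hε _) (HZ_rp_le ε hε z hz _)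

lemma HZ_Sdiff (s : ℂ) (hs : 1 < s.re) (y : ℝ) (hy0 : 0 ≤ y) (hy1 : y ≤ 1) (a : ℕ) (ε : ℝ) (hε : 0 < ε) :
    DifferentiableOn ℂ (HZSS s y a) {z : ℂ | ε < z.re} := by
  have hU : IsOpen {z : ℂ | ε < z.re} := isOpen_lt continuous_const Complex.continuous_re
  obtain ⟨D, hD0, hD⟩ := HZ_dbound s hs y hy0 hy1 a
  refine Complex.differentiableOn_tsum_of_summable_norm ((HZ_T0 ε hε).mul_left D) (fun k => ?_) hU fun k z hz =>
    HZ_Sbound D _ k (hD k) ε hε z (le_of_lt hz)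
  intro z hz
  have hz' : ε < z.re := hz
  refine DifferentiableAt.differentiableWithinAt ?_
  refine DifferentiableAt.div (by fun_prop) ?_ (HZ_rp_ne z (hε.trans hz') _)
  unfold risingProd
  fun_prop

lemma HZ_main (s : ℂ) (hs : 1 < s.re) (y : ℝ) (hy0 : 0 ≤ y) (hy1 : y ≤ 1) (a : ℕ) (z : ℂ) (hz : 0 < z.re) :
    HZL s y a z = HZSS s y a z := by
  obtain ⟨ε, hε, hεz, hε1⟩ : ∃ ε : ℝ, 0 < ε ∧ ε < z.re ∧ ε < 1 :=
    ⟨min z.re 1 / 2, by positivity, by have := min_le_left z.re 1; linarith,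
      by have := min_le_right z.re 1; linarith⟩
  have hU : IsOpen {z : ℂ | ε < z.re} := isOpen_lt continuous_const Complex.continuous_re
  have hL : DifferentiableOn ℂ (HZL s y a) {z : ℂ | ε < z.re} := by
    have hF := HZ_Fdiff s hs y hy1 ε hε
    have hc : DifferentiableOn ℂ (fun z : ℂ => z ^ (s - 1)) {z : ℂ | ε < z.re} := by
      intro u hu
      have hu' : ε < u.re := hu
      refine DifferentiableAt.differentiableWithinAt ?_
      exact DifferentiableAt.cpow (by fun_prop) (by fun_prop) (Or.inl (by linarith))
    have hs' : DifferentiableOn ℂ (fun z : ℂ => ∑ n ∈ range (a + 2), HZβ s y 0 n / z ^ n) {z : ℂ | ε < z.re} := by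
      refine DifferentiableOn.fun_sum fun n _ => ?_
      refine DifferentiableOn.div (by fun_prop) (by fun_prop) fun u hu => pow_ne_zero _ ?_
      have hu' : ε < u.re := hu
      intro h; rw [h] at hu'; simp at hu'; linarith
    exact DifferentiableOn.mul (by fun_prop) ((hc.mul ((differentiableOn_const _).mul hF)).sub hs')
  have hS := HZ_Sdiff s hs y hy0 hy1 a ε hε
  refine (hL.analyticOnNhd hU).eqOn_of_preconnected_of_frequently_eq (hS.analyticOnNhd hU)
    (convex_halfSpace_re_gt ε).isPreconnected (z₀ := 1) (by simpa using hε1) ?_ hεz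
  have ht : Tendsto (fun n : ℕ => ((1 + 1 / ((n : ℝ) + 1) : ℝ) : ℂ)) atTop (𝓝[≠] 1) := by
    refine tendsto_nhdsWithin_iff.mpr ⟨?_, Eventually.of_forall fun n => ?_⟩
    · have h := (tendsto_one_div_add_atTop_nhds_zero_nat (𝕜 := ℝ)).const_add 1
      rw [add_zero] at h
      have := (Complex.continuous_ofReal.tendsto (1:ℝ)).comp h
      simpa [Function.comp_def] using this
    · have : (0:ℝ) < 1 / ((n : ℝ) + 1) := by positivity
      simp only [Set.mem_compl_iff, Set.mem_singleton_iff]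
      intro h
      have h2 : (1 + 1 / ((n : ℝ) + 1) : ℝ) = 1 := by exact_mod_cast h
      linarith
  refine ht.frequently (Frequently.of_forall fun n => ?_)
  exact HZ_R s hs y hy0 hy1 a _ (by positivity)

lemma HZ_summable (s : ℂ) (hs : 1 < s.re) (y : ℝ) (hy0 : 0 ≤ y) (hy1 : y ≤ 1) (a : ℕ) (z : ℂ) (hz : 0 < z.re) :
    Summable (fun k : ℕ => ‖HZd (HZβ s y (a + 1)) (k + 1) / risingProd z (k + 1)‖) := by
  obtain ⟨D, hD0, hD⟩ := HZ_dbound s hs y hy0 hy1 a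
  exact Summable.of_nonneg_of_le (fun _ => norm_nonneg _)
    (fun k => HZ_Sbound D _ k (hD k) z.re hz z le_rfl) ((HZ_T0 z.re hz).mul_left D)

lemma HZ_shift (s : ℂ) (y : ℝ) (k : ℕ) : HZd (HZβ s y 0) (k + 2) =
    HZd (HZβ s y 1) (k + 1) + (k + 1) * HZd (HZβ s y 0) (k + 1) := HZd_succ _ _

lemma HZ_d0 (s : ℂ) (hs : 1 < s.re) (y : ℝ) (hy0 : 0 ≤ y) (hy1 : y ≤ 1) :
    ∃ D : ℝ, 0 ≤ D ∧ ∀ k : ℕ, ‖HZd (HZβ s y 0) (k + 1)‖ ≤ D * (1 + harmonic k) * k ! := by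
  obtain ⟨D, hD0, hD⟩ := HZ_dbound s hs y hy0 hy1 0
  refine ⟨D + ‖HZβ s y 0 1‖, by positivity, fun k => ?_⟩
  induction k with
  | zero => simp [HZd_one]; simpa using hD0
  | succ k ih =>
    have h1 := hD k
    rw [zero_add] at h1
    rw [HZ_shift]
    refine (norm_add_le _ _).trans ?_
    have hk : ‖(k + 1 : ℂ)‖ = (k : ℝ) + 1 := by
      rw [show (k + 1 : ℂ) = ((k + 1 : ℕ) : ℂ) by push_cast; ring, Complex.norm_natCast]; push_cast; ring
    rw [norm_mul, hk, harmonic_succ, Nat.factorial_succ]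
    push_cast
    calc _ ≤ (D + ‖HZβ s y 0 1‖) * k ! + ((k : ℝ) + 1) * ((D + ‖HZβ s y 0 1‖) * (1 + harmonic k) * k !) := by
          gcongr
          refine h1.trans ?_
          gcongr
          linarith [norm_nonneg (HZβ s y 0 1)]
      _ = _ := by field_simp; ring

lemma HZ_x0 (s : ℂ) (hs : 1 < s.re) (y : ℝ) (hy0 : 0 ≤ y) (hy1 : y ≤ 1) (z : ℂ) (hz : 0 < z.re) :
    ∃ C : ℝ, ∀ k : ℕ, ‖HZd (HZβ s y 0) (k + 1) / risingProd z (k + 1)‖ ≤ C * ((k : ℝ) + 1) ^ (-1 - z.re / 2) := by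
  obtain ⟨D, hD0, hD⟩ := HZ_d0 s hs y hy0 hy1
  obtain ⟨C, hC0, hC⟩ := HZ_gs z.re hz
  set σ := z.re with hσ
  refine ⟨D * (2 + 1 / (σ / 2)) * C, fun k => ?_⟩
  have hk : (1:ℝ) ≤ (k : ℝ) + 1 := by have : (0:ℝ) ≤ k := Nat.cast_nonneg k
                                      linarith
  have h1 : (harmonic k : ℝ) ≤ 1 + Real.log ((k : ℝ) + 1) := by
    rcases Nat.eq_zero_or_pos k with rfl | hk0
    · simp
    · refine (harmonic_le_one_add_log k).trans ?_
      have : (0:ℝ) < k := by exact_mod_cast hk0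
      gcongr; linarith
  have h2 : Real.log ((k : ℝ) + 1) ≤ ((k : ℝ) + 1) ^ (σ / 2) / (σ / 2) :=
    Real.log_le_rpow_div (by linarith) (by positivity)
  have h3 : 1 ≤ ((k : ℝ) + 1) ^ (σ / 2) := Real.one_le_rpow hk (by positivity)
  have h4 : 1 + (harmonic k : ℝ) ≤ (2 + 1 / (σ / 2)) * ((k : ℝ) + 1) ^ (σ / 2) := by
    have : (2 + 1 / (σ / 2)) * ((k : ℝ) + 1) ^ (σ / 2) = 2 * ((k : ℝ) + 1) ^ (σ / 2) + ((k : ℝ) + 1) ^ (σ / 2) / (σ / 2) := by ring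
    rw [this]; linarith
  have h5 := HZ_Sbound _ _ k (hD k) σ hz z le_rfl
  refine h5.trans ?_
  have h6 := HZ_rp_pos σ hz (k + 1)
  calc _ ≤ (D * ((2 + 1 / (σ / 2)) * ((k : ℝ) + 1) ^ (σ / 2))) * (C * ((k : ℝ) + 1) ^ (-1 - σ)) := by
        gcongr
        exact hC k
    _ = D * (2 + 1 / (σ / 2)) * C * (((k : ℝ) + 1) ^ (σ / 2) * ((k : ℝ) + 1) ^ (-1 - σ)) := by ring
    _ = _ := by
        rw [← Real.rpow_add (by linarith)]
        congr 2; ring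

lemma HZ_sum0 (s : ℂ) (hs : 1 < s.re) (y : ℝ) (hy0 : 0 ≤ y) (hy1 : y ≤ 1) (z : ℂ) (hz : 0 < z.re) :
    Summable (fun k : ℕ => ‖HZd (HZβ s y 0) (k + 1) / risingProd z (k + 1)‖) := by
  obtain ⟨C, hC⟩ := HZ_x0 s hs y hy0 hy1 z hz
  have h1 : Summable (fun n : ℕ => (n : ℝ) ^ (-1 - z.re / 2)) := Real.summable_nat_rpow.mpr (by linarith)
  have h2 := ((summable_nat_add_iff 1).mpr h1).mul_left C
  refine Summable.of_nonneg_of_le (fun _ => norm_nonneg _) (fun k => ?_) h2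
  simpa using hC k

lemma HZ_tele (s : ℂ) (hs : 1 < s.re) (y : ℝ) (hy0 : 0 ≤ y) (hy1 : y ≤ 1) (z : ℂ) (hz : 0 < z.re) :
    HZSS s y 0 z = z * (∑' k : ℕ, HZd (HZβ s y 0) (k + 1) / risingProd z (k + 1)) - HZβ s y 0 1 := by
  obtain ⟨C, hC⟩ := HZ_x0 s hs y hy0 hy1 z hz
  set x : ℕ → ℂ := fun k => HZd (HZβ s y 0) (k + 1) / risingProd z (k + 1) with hx
  set Y : ℕ → ℂ := fun k => (z + k + 1) * x k with hY
  have hsx : Summable x := (HZ_sum0 s hs y hy0 hy1 z hz).of_norm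
  have hrec : ∀ k : ℕ, HZd (HZβ s y (0 + 1)) (k + 1) / risingProd z (k + 1) = (Y (k + 1) - Y k) + z * x k := by
    intro k
    have hne := HZ_rp_ne z hz (k + 1)
    have hne2 := HZ_rp_ne z hz (k + 2)
    have e : risingProd z (k + 2) = risingProd z (k + 1) * (z + (k + 1 : ℕ) + 1) := by
      rw [risingProd, Finset.prod_range_succ]; rfl
    have hne3 : z + (k + 1 : ℕ) + 1 ≠ 0 := by
      intro h; rw [e, h, mul_zero] at hne2; exact hne2 rfl
    have e2 : HZd (HZβ s y (0 + 1)) (k + 1) = HZd (HZβ s y 0) (k + 2) - (k + 1) * HZd (HZβ s y 0) (k + 1) := by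
      rw [HZ_shift]; ring
    have e3 : Y (k + 1) = HZd (HZβ s y 0) (k + 2) / risingProd z (k + 1) := by
      simp only [hY, hx]
      rw [show k + 1 + 1 = k + 2 from rfl, e]
      field_simp
    rw [e3, e2]
    simp only [hY, hx]
    field_simp
    ring
  have hY0 : Tendsto Y atTop (𝓝 0) := by
    have hb : ∀ k : ℕ, ‖Y k‖ ≤ (‖z‖ + 1) * (C * ((k : ℝ) + 1) ^ (-(z.re / 2))) := by
      intro k
      have hkk : (0:ℝ) ≤ k := Nat.cast_nonneg k
      have h1 : ‖z + k + 1‖ ≤ (‖z‖ + 1) * ((k : ℝ) + 1) := by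
        have : ‖z + k + 1‖ ≤ ‖z‖ + k + 1 := by
          refine (norm_add_le _ _).trans ?_
          refine add_le_add ((norm_add_le _ _).trans ?_) (by simp)
          simp
        nlinarith [norm_nonneg z]
      rw [hY, norm_mul]
      calc _ ≤ ((‖z‖ + 1) * ((k : ℝ) + 1)) * (C * ((k : ℝ) + 1) ^ (-1 - z.re / 2)) := by
            gcongr
            exact hC k
        _ = _ := by
            rw [show -(z.re / 2) = 1 + (-1 - z.re / 2) by ring, Real.rpow_add (by positivity), Real.rpow_one]
            ring
    refine squeeze_zero_norm hb ?_
    have h1 : Tendsto (fun k : ℕ => ((k : ℝ) + 1) ^ (-(z.re / 2))) atTop (𝓝 0) :=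
      (tendsto_rpow_neg_atTop (by positivity)).comp
        (tendsto_atTop_add_const_right _ _ tendsto_natCast_atTop_atTop)
    have := (h1.const_mul C).const_mul (‖z‖ + 1)
    simpa using this
  have hs1 : Summable (fun k : ℕ => HZd (HZβ s y (0 + 1)) (k + 1) / risingProd z (k + 1)) :=
    (HZ_summable s hs y hy0 hy1 0 z hz).of_norm
  have hsY : Summable (fun k : ℕ => Y (k + 1) - Y k) := by
    have := hs1.sub (hsx.mul_left z)
    refine this.congr fun k => ?_
    rw [hrec]; ring
  have hYs : ∑' k : ℕ, (Y (k + 1) - Y k) = - Y 0 := by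
    have h1 := hsY.hasSum.tendsto_sum_nat
    have h2 : Tendsto (fun n : ℕ => ∑ k ∈ range n, (Y (k + 1) - Y k)) atTop (𝓝 (0 - Y 0)) := by
      simp_rw [Finset.sum_range_sub]
      exact hY0.sub_const _
    rw [tendsto_nhds_unique h1 h2, zero_sub]
  have hY00 : Y 0 = HZβ s y 0 1 := by
    have hne := HZ_rp_ne z hz 1
    simp only [hY, hx, zero_add, HZd_one]
    simp only [risingProd, Finset.prod_range_one] at hne ⊢
    field_simp
  rw [HZSS, tsum_congr hrec, hsY.tsum_add (hsx.mul_left z), hYs, hY00, tsum_mul_left]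
  ring

lemma HZ_final0 (s : ℂ) (y : ℝ) (a : ℕ) (z : ℂ) (k : ℕ) :
    (-1 : ℂ) ^ (k + 1 + a) *
          (∑ l ∈ Icc 1 (k + 1),
            cchoose (1 - s) (l + a) * (S1 (k + 1) l : ℂ) * (bernPoly (l + a) y : ℂ)) /
        risingProd z (k + 1) = HZd (HZβ s y a) (k + 1) / risingProd z (k + 1) := by
  congr 1
  rw [HZd, Finset.mul_sum]
  refine Finset.sum_congr rfl fun l _ => ?_
  simp only [S1, HZβ]
  push_cast
  have : (-1 : ℂ) ^ (k + 1 + a) * (-1) ^ (k + 1 + l) = (-1) ^ (l + a) := by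
    rw [← pow_add, show k + 1 + a + (k + 1 + l) = 2 * (k + 1) + (l + a) by ring, pow_add, pow_mul]
    simp
  rw [← this]; ring

lemma HZ_all (s : ℂ) (hs : 1 < s.re) (y : ℝ) (hy0 : 0 ≤ y) (hy1 : y ≤ 1) (a : ℕ) (z : ℂ) (hz : 0 < z.re) :
    Summable (fun k : ℕ => ‖HZd (HZβ s y a) (k + 1) / risingProd z (k + 1)‖) ∧
    z ^ a * (z ^ (s - 1) * ((s - 1) * HZF s y z) - ∑ n ∈ range (a + 1), HZβ s y 0 n / z ^ n) =
      ∑' k : ℕ, HZd (HZβ s y a) (k + 1) / risingProd z (k + 1) := by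
  have hz0 : z ≠ 0 := by intro h; rw [h] at hz; simp at hz
  cases a with
  | zero =>
    refine ⟨HZ_sum0 s hs y hy0 hy1 z hz, ?_⟩
    have h1 := HZ_main s hs y hy0 hy1 0 z hz
    rw [HZ_tele s hs y hy0 hy1 z hz, HZL, Finset.sum_range_succ, zero_add, pow_one] at h1
    apply mul_left_cancel₀ hz0
    rw [pow_zero, one_mul, zero_add]
    have h3 : z * (HZβ s y 0 1 / z) = HZβ s y 0 1 := by field_simp
    linear_combination h1 + h3
  | succ a => exact ⟨HZ_summable s hs y hy0 hy1 a z hz, HZ_main s hs y hy0 hy1 a z hz⟩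

end HZ

open Finset in
/-- Inverse factorial series expansion for the Hurwitz zeta function
(formula (23) of Theorem 4.3, for `Re(s) > 1`). -/
theorem hurwitzZeta_inverse_factorial_series (y : ℝ) (hy0 : 0 ≤ y) (hy1 : y ≤ 1)
    (s : ℂ) (hs : 1 < s.re) (a : ℕ) (z : ℂ) (hz : 0 < z.re) :
    Summable (fun k : ℕ =>
      ‖(-1 : ℂ) ^ (k + 1 + a) *
          (∑ l ∈ Icc 1 (k + 1),
            cchoose (1 - s) (l + a) * (S1 (k + 1) l : ℂ) * (bernPoly (l + a) y : ℂ)) /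
        risingProd z (k + 1)‖) ∧
    (∑' k : ℕ, ((k : ℂ) + z + 1 - y) ^ (-s)) =
      z ^ (1 - s) / (s - 1) +
        z ^ (1 - s) / (s - 1) *
          ∑ k ∈ Icc 1 a, (-1 : ℂ) ^ k * cchoose (1 - s) k * (bernPoly k y : ℂ) / z ^ k +
        z ^ (1 - s - a) / (s - 1) *
          ∑' k : ℕ,
            (-1 : ℂ) ^ (k + 1 + a) *
                (∑ l ∈ Icc 1 (k + 1),
                  cchoose (1 - s) (l + a) * (S1 (k + 1) l : ℂ) * (bernPoly (l + a) y : ℂ)) /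
              risingProd z (k + 1) := by
  obtain ⟨h1, h2⟩ := HZ_all s hs y hy0 hy1 a z hz
  have hz0 : z ≠ 0 := by intro h; rw [h] at hz; simp at hz
  have hs0 : s - 1 ≠ 0 := by
    intro h; have := congrArg Complex.re h; simp at this; linarith
  simp_rw [HZ_final0 s y a z]
  refine ⟨h1, ?_⟩
  rw [← h2]
  have hP : z ^ (1 - s) * z ^ (s - 1) = 1 := by
    rw [← Complex.cpow_add _ _ hz0, show 1 - s + (s - 1) = 0 by ring, Complex.cpow_zero]
  have hPa : z ^ (1 - s - a) * z ^ a = z ^ (1 - s) := by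
    rw [Complex.cpow_sub _ _ hz0, Complex.cpow_natCast]
    exact div_mul_cancel₀ _ (pow_ne_zero _ hz0)
  have hsum : ∑ n ∈ range (a + 1), HZβ s y 0 n / z ^ n = 1 +
      ∑ k ∈ Icc 1 a, (-1 : ℂ) ^ k * cchoose (1 - s) k * (bernPoly k y : ℂ) / z ^ k := by
    rw [Finset.range_eq_Ico, Finset.sum_eq_sum_Ico_succ_bot (by omega)]
    congr 1
    simp [HZβ, cchoose, bernPoly]
  rw [hsum]
  set T := ∑ k ∈ Icc 1 a, (-1 : ℂ) ^ k * cchoose (1 - s) k * (bernPoly k y : ℂ) / z ^ k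
  change HZF s y z = _
  generalize HZF s y z = F
  have e : z ^ (1 - s - a) / (s - 1) * (z ^ a * (z ^ (s - 1) * ((s - 1) * F) - (1 + T)))
      = (z ^ (1 - s) * z ^ (s - 1)) * ((s - 1) / (s - 1)) * F - z ^ (1 - s) / (s - 1) * (1 + T) := by
    rw [← hPa]; ring
  rw [e, hP, div_self hs0]
  ring
end

section
/- Inverse factorial series expansion for the digamma function: Let y ∈ [0,1] be real, let a ∈ ℕ₀, and let z ∈ ℂ with Re(z) > 0. Then the series ∑_{k=1}^{∞} (−1)^{k+1} (∑_{l=1}^{k} ((−1)^l/(l+a)) S_k^{(1)}(l) B_{l+a}(y)) / ((z+1)(z+2)⋯(z+k)) converges absolutely, and ψ(z + 1 − y) = log(z) − ∑_{k=1}^{a} B_k(y)/(k z^k) + (1/z^a) ∑_{k=1}^{∞} (−1)^{k+1} (∑_{l=1}^{k} ((−1)^l/(l+a)) S_k^{(1)}(l) B_{l+a}(y)) / ((z+1)(z+2)⋯(z+k)). -/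
namespace DIF
open Finset

lemma st_zero (k : ℕ) : stirling1Unsigned (k+1) 0 = 0 := by
  induction k with
  | zero => simp [stirling1Unsigned]
  | succ n ih => rw [stirling1Unsigned, ih]; simp

lemma st_gt (k l : ℕ) (h : k < l) : stirling1Unsigned k l = 0 := by
  induction k generalizing l with
  | zero => cases l with
    | zero => omega
    | succ l => simp [stirling1Unsigned]
  | succ n ih => cases l with
    | zero => omega
    | succ l => rw [stirling1Unsigned, ih _ (by omega), ih _ (by omega)]; simp

/-- general recurrence -/
lemma st_sum (f : ℕ → ℝ) (k : ℕ) :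
    ∑ l ∈ range (k+2), (stirling1Unsigned (k+2) (l+1) : ℝ) * f l
     = ∑ l ∈ range (k+1), (stirling1Unsigned (k+1) (l+1) : ℝ) * f (l+1)
      + (k+1) * ∑ l ∈ range (k+1), (stirling1Unsigned (k+1) (l+1) : ℝ) * f l := by
  have h : ∀ l, (stirling1Unsigned (k+2) (l+1) : ℝ) * f l =
      (stirling1Unsigned (k+1) l : ℝ) * f l + (k+1) * ((stirling1Unsigned (k+1) (l+1) : ℝ) * f l) := by
    intro l
    rw [stirling1Unsigned]; push_cast; ring
  simp_rw [h]
  rw [sum_add_distrib, ← mul_sum, sum_range_succ' (fun l => (stirling1Unsigned (k+1) l : ℝ) * f l),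
    st_zero, sum_range_succ (fun l => (stirling1Unsigned (k+1) (l+1) : ℝ) * f l) (k+1), st_gt (k+1) (k+1+1) (by omega)]
  simp

/-- numerator coefficients -/
noncomputable def b (y : ℝ) (a k : ℕ) : ℝ :=
  ∑ l ∈ range k, (stirling1Unsigned k (l+1) : ℝ) * (bernPoly (l+1+a) y / ((l+1+a : ℕ) : ℝ))

lemma b_rec (y : ℝ) (a k : ℕ) : b y (a+1) (k+1) = b y a (k+2) - (k+1) * b y a (k+1) := by
  unfold b
  rw [st_sum (fun l => bernPoly (l+1+a) y / ((l+1+a : ℕ) : ℝ))]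
  simp only [add_sub_cancel_right]
  refine sum_congr rfl fun l _ => ?_
  rw [show l+1+(a+1) = l+1+1+a by ring]

noncomputable def rf (k : ℕ) (s : ℝ) : ℝ := ∏ i ∈ range k, (s + i)

lemma rf_succ (k : ℕ) (s : ℝ) : rf (k+1) s = rf k s * (s + k) := by
  rw [rf, prod_range_succ]; rfl

lemma st_eval (k : ℕ) (s : ℝ) :
    ∑ l ∈ range (k+1), (stirling1Unsigned (k+1) (l+1) : ℝ) * s ^ l = rf k (s+1) := by
  induction k with
  | zero => simp [rf, stirling1Unsigned]
  | succ n ih =>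
    rw [st_sum, rf_succ, ← ih]
    simp_rw [pow_succ, ← mul_assoc]
    rw [← sum_mul]; ring

lemma rf_succ' (k : ℕ) (s : ℝ) : rf (k+1) s = rf k (s+1) * s := by
  rw [rf, prod_range_succ', rf]; push_cast
  rw [add_zero]; congr 1
  exact prod_congr rfl fun i _ => by ring

lemma bern_eq (n : ℕ) (x : ℝ) : bernPoly n x = bernoulliFun n x := by
  unfold bernPoly bernoulliFun Polynomial.bernoulli
  rw [Polynomial.map_sum, Polynomial.eval_finsetSum]
  refine sum_congr rfl fun i _ => ?_
  simp only [Polynomial.map_monomial, Polynomial.eval_monomial, map_mul, eq_ratCast, Rat.cast_natCast]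
  ring

lemma bern_nat (k n : ℕ) : bernoulliFun (k+1) ((n:ℝ)+1) = bernoulliFun (k+1) n + (k+1) * (n:ℝ)^k := by
  have h := Polynomial.bernoulli_eval_one_add (k+1) (n:ℚ)
  have e : ∀ q : ℚ, bernoulliFun (k+1) (q:ℝ) = (((Polynomial.bernoulli (k+1)).eval q : ℚ) : ℝ) := by
    intro q
    unfold bernoulliFun
    rw [← eq_ratCast (algebraMap ℚ ℝ) q, Polynomial.eval_map_algebraMap, Polynomial.aeval_algebraMap_apply]
    simp
  have e1 := e (1 + n)
  have e2 := e n
  rw [h] at e1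
  push_cast at e1 e2
  rw [add_comm (n:ℝ) 1, e1, e2]

lemma cont_rf (k : ℕ) : Continuous (rf k) := by
  unfold rf; fun_prop

lemma b_zero (y : ℝ) (k : ℕ) :
    b y 0 (k+1) = (rf (k+1) y - ∫ s in (0:ℝ)..1, rf (k+1) s) / (k+1) := by
  have hk : (k:ℝ) + 1 ≠ 0 := by positivity
  let P : Polynomial ℝ := ∑ l ∈ range (k+1), Polynomial.C ((stirling1Unsigned (k+1) (l+1) : ℝ) / (l+1)) *
      (Polynomial.bernoulli (l+1)).map (algebraMap ℚ ℝ)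
      - Polynomial.C (1/((k:ℝ)+1)) * ∏ i ∈ range (k+1), (Polynomial.X + Polynomial.C (i:ℝ))
  have hP : ∀ x, P.eval x = b x 0 (k+1) - rf (k+1) x / (k+1) := by
    intro x
    simp only [P, Polynomial.eval_sub, Polynomial.eval_finsetSum, Polynomial.eval_mul, Polynomial.eval_prod,
      Polynomial.eval_C, Polynomial.eval_add, Polynomial.eval_X, b, rf, bern_eq, bernoulliFun]
    congr 1
    · refine sum_congr rfl fun l _ => ?_
      push_cast; simp only [add_zero]; ring
    · ring
  have hper : ∀ n : ℕ, P.eval (n:ℝ) = P.eval 0 := by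
    intro n
    induction n with
    | zero => simp
    | succ n ih =>
      rw [← ih, hP, hP]
      have h1 : b ((n:ℝ)+1) 0 (k+1) = b n 0 (k+1) + rf k ((n:ℝ)+1) := by
        rw [← st_eval, b, b, ← sum_add_distrib]
        refine sum_congr rfl fun l _ => ?_
        simp only [add_zero, bern_eq]
        rw [bern_nat]; push_cast
        have : (l:ℝ)+1 ≠ 0 := by positivity
        field_simp
      push_cast
      rw [h1, rf_succ, rf_succ']
      field_simp; ring
  have hC : P = Polynomial.C (P.eval 0) := by
    apply Polynomial.eq_of_infinite_eval_eq
    refine (Set.infinite_range_of_injective (Nat.cast_injective (R := ℝ))).mono ?_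
    rintro _ ⟨n, rfl⟩
    simp [hper n]
  have hconst : ∀ x, b x 0 (k+1) = P.eval 0 + rf (k+1) x / (k+1) := by
    intro x
    have := hP x
    rw [hC] at this
    simp only [Polynomial.eval_C] at this
    linarith
  have hint : ∫ x in (0:ℝ)..1, b x 0 (k+1) = 0 := by
    unfold b
    rw [intervalIntegral.integral_finsetSum]
    · apply sum_eq_zero
      intro l _
      simp only [bern_eq, add_zero]
      rw [intervalIntegral.integral_const_mul, intervalIntegral.integral_div, integral_bernoulliFun_eq_zero (by omega)]
      simp
    · intro l _
      simp only [bern_eq]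
      apply Continuous.intervalIntegrable
      have := continuous_bernoulliFun (l+1+0)
      fun_prop
  simp_rw [hconst] at hint
  have hc := cont_rf (k+1)
  rw [intervalIntegral.integral_add (by simp) ((hc.div_const _).intervalIntegrable _ _),
    intervalIntegral.integral_div] at hint
  simp at hint
  rw [hconst]
  field_simp
  field_simp at hint
  linarith

/-- differences -/
def D : ℕ → (ℕ → ℝ) → ℕ → ℝ
  | 0, f, m => f m
  | j+1, f, m => D j f (m+1) - D j f m

lemma D_T (f g : ℕ → ℝ) (hg : ∀ m, g m = ((m:ℝ)+1) * (f (m+1) - f m)) (j : ℕ) : ∀ m,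
    D j g m = ((m:ℝ)+1) * D (j+1) f m + j * D j f (m+1) := by
  induction j with
  | zero => intro m; simp [D, hg]
  | succ j ih =>
    intro m
    rw [D, ih, ih]
    have h1 : D (j+1+1) f m = D (j+1) f (m+1) - D (j+1) f m := rfl
    have h2 : D (j+1) f (m+1) = D j f (m+1+1) - D j f (m+1) := rfl
    rw [h1]; push_cast
    linear_combination (-(j:ℝ)) * h2

def Good (f : ℕ → ℝ) : Prop := ∀ j : ℕ, ∃ C, ∀ m : ℕ, ((m:ℝ)+1)^j * |D j f m| ≤ C

lemma Good.T {f g : ℕ → ℝ} (hf : Good f) (hg : ∀ m, g m = ((m:ℝ)+1) * (f (m+1) - f m)) : Good g := by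
  intro j
  obtain ⟨C1, h1⟩ := hf (j+1)
  obtain ⟨C2, h2⟩ := hf j
  refine ⟨C1 + j * C2, fun m => ?_⟩
  rw [D_T f g hg]
  have hm : (0:ℝ) ≤ (m:ℝ)+1 := by positivity
  calc ((m:ℝ)+1)^j * |((m:ℝ)+1) * D (j+1) f m + j * D j f (m+1)|
      ≤ ((m:ℝ)+1)^j * (((m:ℝ)+1) * |D (j+1) f m| + j * |D j f (m+1)|) := by
        gcongr
        refine (abs_add_le _ _).trans ?_
        rw [abs_mul, abs_mul, abs_of_nonneg hm, Nat.abs_cast]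
    _ = ((m:ℝ)+1)^(j+1) * |D (j+1) f m| + j * (((m:ℝ)+1)^j * |D j f (m+1)|) := by ring
    _ ≤ C1 + j * C2 := by
        gcongr
        · exact h1 m
        · refine le_trans ?_ (h2 (m+1))
          push_cast
          gcongr
          linarith

noncomputable def r (k : ℕ) (s : ℝ) : ℝ := rf k s / (k.factorial : ℝ)

lemma r_succ (k : ℕ) (s : ℝ) : r (k+1) s = r k s * ((s + k) / (k+1)) := by
  rw [r, r, rf_succ, Nat.factorial_succ]; push_cast
  have : (k.factorial:ℝ) ≠ 0 := by positivity
  field_simp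

lemma r_nonneg (k : ℕ) (s : ℝ) (h0 : 0 ≤ s) : 0 ≤ r k s := by
  unfold r rf; apply div_nonneg
  · exact prod_nonneg fun i _ => by positivity
  · positivity

lemma r_le (k : ℕ) (s : ℝ) (h0 : 0 ≤ s) (h1 : s ≤ 1) : r k s ≤ 1 := by
  induction k with
  | zero => simp [r, rf]
  | succ n ih =>
    rw [r_succ]
    apply mul_le_one₀ ih (by positivity)
    rw [div_le_one (by positivity)]; linarith

lemma cont_r (k : ℕ) : Continuous (r k) := (cont_rf k).div_const _

noncomputable def q (j m : ℕ) (s : ℝ) : ℝ := r (m+1) s * ∏ i ∈ range j, ((s - 1 - i) / (m + 2 + i))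

lemma D_r (s : ℝ) (j : ℕ) : ∀ m, D j (fun m => r (m+1) s) m = q j m s := by
  induction j with
  | zero => intro m; simp [D, q]
  | succ j ih =>
    intro m
    rw [D, ih, ih, q, q, q, r_succ (m+1)]
    rw [prod_range_succ (fun i : ℕ => (s - 1 - (i:ℝ)) / ((m:ℝ) + 2 + i))]
    rw [prod_div_distrib, prod_div_distrib]
    have h : ∀ j : ℕ, (∏ i ∈ range j, ((m:ℝ) + 2 + i)) * ((m:ℝ) + 2 + j) =
        (m+2) * ∏ i ∈ range j, (((m+1:ℕ):ℝ) + 2 + i) := by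
      intro j
      induction j with
      | zero => simp
      | succ j ih => rw [prod_range_succ, ih, prod_range_succ]; push_cast; ring
    have hj := h j
    have hA : (∏ i ∈ range j, ((m:ℝ) + 2 + i)) ≠ 0 := prod_ne_zero_iff.2 fun i _ => by positivity
    have hB : (∏ i ∈ range j, (((m+1:ℕ):ℝ) + 2 + i)) =
      (∏ i ∈ range j, ((m:ℝ) + 2 + i)) * ((m:ℝ) + 2 + j) / (m+2) := by
      rw [hj]; field_simp
    rw [hB]
    generalize (∏ i ∈ range j, ((m:ℝ) + 2 + i)) = A at *
    push_cast
    have h2 : (m:ℝ)+2 ≠ 0 := by positivity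
    have h3 : (m:ℝ)+1+1 ≠ 0 := by positivity
    have h4 : (m:ℝ)+2+j ≠ 0 := by positivity
    field_simp
    ring

lemma q_bound (j m : ℕ) (s : ℝ) (h0 : 0 ≤ s) (h1 : s ≤ 1) : |q j m s| ≤ (j.factorial : ℝ) / ((m:ℝ)+1)^j := by
  induction j with
  | zero => simp [q]; rw [abs_of_nonneg (r_nonneg _ _ h0)]; exact r_le _ _ h0 h1
  | succ j ih =>
    have : q (j+1) m s = q j m s * ((s - 1 - j) / (m + 2 + j)) := by
      rw [q, q, prod_range_succ, mul_assoc]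
    rw [this, abs_mul, Nat.factorial_succ, pow_succ, mul_comm, abs_div]
    have e : ((((j+1) * j.factorial : ℕ)):ℝ) / (((m:ℝ)+1)^j * (m+1)) = ((j+1)/(m+1)) * ((j.factorial : ℝ) / ((m:ℝ)+1)^j) := by
      push_cast; field_simp
    rw [e]
    gcongr
    · rw [abs_le]; constructor <;> linarith [(Nat.cast_nonneg j : (0:ℝ) ≤ j)]
    · rw [abs_of_nonneg (by positivity)]; linarith [(Nat.cast_nonneg j : (0:ℝ) ≤ j)]

lemma cont_q (j m : ℕ) : Continuous (q j m) := by
  unfold q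
  have := cont_r (m+1)
  apply this.mul
  refine continuous_finsetProd _ fun i _ => ?_
  fun_prop

noncomputable def R (y : ℝ) (k : ℕ) : ℝ := r k y - ∫ s in (0:ℝ)..1, r k s

lemma D_R (y : ℝ) (j : ℕ) : ∀ m, D j (fun m => R y (m+1)) m = q j m y - ∫ s in (0:ℝ)..1, q j m s := by
  induction j with
  | zero => intro m; simp [D, q, R]
  | succ j ih =>
    intro m
    have hq : ∀ s, q (j+1) m s = q j (m+1) s - q j m s := by
      intro s; rw [← D_r, ← D_r, ← D_r]; rfl
    rw [D, ih, ih]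
    simp_rw [hq]
    rw [intervalIntegral.integral_sub ((cont_q _ _).intervalIntegrable _ _) ((cont_q _ _).intervalIntegrable _ _)]
    ring

lemma good_R (y : ℝ) (h0 : 0 ≤ y) (h1 : y ≤ 1) : Good (fun m => R y (m+1)) := by
  intro j
  refine ⟨2 * (j.factorial : ℝ), fun m => ?_⟩
  rw [D_R]
  have e1 := q_bound j m y h0 h1
  have e2 : |∫ s in (0:ℝ)..1, q j m s| ≤ (j.factorial : ℝ) / ((m:ℝ)+1)^j := by
    have := intervalIntegral.norm_integral_le_of_norm_le_const (a := 0) (b := 1) (f := q j m)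
      (C := (j.factorial : ℝ) / ((m:ℝ)+1)^j) (fun x hx => by
        rw [Set.uIoc_of_le zero_le_one] at hx
        exact q_bound j m x hx.1.le hx.2)
    simpa using this
  have e3 : |q j m y - ∫ s in (0:ℝ)..1, q j m s| ≤ 2 * (j.factorial : ℝ) / ((m:ℝ)+1)^j := by
    refine (abs_sub _ _).trans ?_
    rw [mul_div_assoc]; linarith
  rw [le_div_iff₀ (by positivity)] at e3
  linarith

lemma R_bound (y : ℝ) (h0 : 0 ≤ y) (h1 : y ≤ 1) (k : ℕ) : |R y (k+1)| ≤ 2 := by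
  have := good_R y h0 h1
  have e1 := q_bound 0 k y h0 h1
  have e2 : |∫ s in (0:ℝ)..1, q 0 k s| ≤ 1 := by
    have := intervalIntegral.norm_integral_le_of_norm_le_const (a := 0) (b := 1) (f := q 0 k)
      (C := 1) (fun x hx => by
        rw [Set.uIoc_of_le zero_le_one] at hx
        simpa using q_bound 0 k x hx.1.le hx.2)
    simpa using this
  have h := D_R y 0 k
  simp only [D] at h
  rw [h]
  simp at e1
  refine (abs_sub _ _).trans ?_
  linarith

noncomputable def beta (y : ℝ) (a m : ℕ) : ℝ := b y a (m+1) / (m.factorial : ℝ)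

lemma beta_zero (y : ℝ) (m : ℕ) : beta y 0 m = R y (m+1) := by
  rw [beta, b_zero, R]
  simp only [r]
  rw [intervalIntegral.integral_div, Nat.factorial_succ]
  push_cast
  have : (m.factorial:ℝ) ≠ 0 := by positivity
  field_simp

lemma good_beta (y : ℝ) (h0 : 0 ≤ y) (h1 : y ≤ 1) (a : ℕ) : Good (beta y a) := by
  induction a with
  | zero => 
    have : beta y 0 = fun m => R y (m+1) := funext fun m => beta_zero y m
    rw [this]; exact good_R y h0 h1
  | succ a ih =>
    refine ih.T fun m => ?_
    rw [beta, beta, beta, b_rec, Nat.factorial_succ]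
    push_cast
    have : (m.factorial:ℝ) ≠ 0 := by positivity
    field_simp

lemma beta_bound (y : ℝ) (h0 : 0 ≤ y) (h1 : y ≤ 1) (a : ℕ) : ∃ C, ∀ m, |beta y a m| ≤ C := by
  obtain ⟨C, h⟩ := good_beta y h0 h1 a 0
  exact ⟨C, fun m => by simpa [D] using h m⟩

lemma rp_succ (x : ℝ) (k : ℕ) : risingProdR x (k+1) = risingProdR x k * (x + k + 1) := by
  rw [risingProdR, prod_range_succ]; rfl

lemma rp_pos (x : ℝ) (hx : 0 < x) (k : ℕ) : 0 < risingProdR x k :=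
  prod_pos fun i _ => by positivity

lemma rp_shift (x : ℝ) (k : ℕ) : risingProdR x (k+1) = risingProdR (x+1) k * (x+1) := by
  rw [risingProdR, prod_range_succ', risingProdR]; push_cast
  rw [add_zero]; congr 1
  exact prod_congr rfl fun i _ => by ring

noncomputable def w (k : ℕ) (x : ℝ) : ℝ := (k.factorial : ℝ) / risingProdR x (k+1)
noncomputable def v (k : ℕ) (x : ℝ) : ℝ := (k.factorial : ℝ) / risingProdR x k

lemma w_pos (x : ℝ) (hx : 0 < x) (k : ℕ) : 0 < w k x :=
  div_pos (by positivity) (rp_pos x hx _)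

lemma v_pos (x : ℝ) (hx : 0 < x) (k : ℕ) : 0 < v k x :=
  div_pos (by positivity) (rp_pos x hx _)

lemma v_tel (x : ℝ) (hx : 0 < x) (k : ℕ) : v k x - v (k+1) x = x * w k x := by
  rw [v, v, w, rp_succ, Nat.factorial_succ]
  have := (rp_pos x hx k).ne'
  have : x + k + 1 ≠ 0 := by positivity
  push_cast
  field_simp
  ring

lemma v_le (x : ℝ) (hx : 0 < x) (k : ℕ) :
    1 + x * ∑ i ∈ range k, (1:ℝ) / (i+1) ≤ (v k x)⁻¹ := by
  induction k with
  | zero => simp [v, risingProdR]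
  | succ n ih =>
    have h : (v (n+1) x)⁻¹ = (v n x)⁻¹ * (1 + x/(n+1)) := by
      rw [v, v, rp_succ, Nat.factorial_succ]
      have := (rp_pos x hx n).ne'
      push_cast
      field_simp
      ring
    rw [h, sum_range_succ]
    have hs : 0 ≤ ∑ i ∈ range n, (1:ℝ) / (i+1) := sum_nonneg fun i _ => by positivity
    have h1 : 1 ≤ (v n x)⁻¹ := by nlinarith
    have h2 : 0 ≤ x/(n+1) := by positivity
    have h3 : x * (1/((n:ℝ)+1)) = x/(n+1) := by ring
    rw [mul_add, h3]
    nlinarith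

lemma v_tendsto (x : ℝ) (hx : 0 < x) : Filter.Tendsto (fun k => v k x) Filter.atTop (nhds 0) := by
  have h : Filter.Tendsto (fun k => (v k x)⁻¹) Filter.atTop Filter.atTop := by
    refine Filter.tendsto_atTop_mono (v_le x hx) ?_
    exact Filter.tendsto_atTop_add_const_left _ _
      (Real.tendsto_sum_range_one_div_nat_succ_atTop.const_mul_atTop hx)
  refine h.inv_tendsto_atTop.congr fun k => ?_
  simp

lemma w_hasSum (x : ℝ) (hx : 0 < x) : HasSum (fun k => w k x) (1/x) := by
  rw [hasSum_iff_tendsto_nat_of_nonneg (fun k => (w_pos x hx k).le)]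
  have h : ∀ n, ∑ i ∈ range n, w i x = (1 - v n x) / x := by
    intro n
    induction n with
    | zero => simp [v, risingProdR]
    | succ n ih =>
      rw [sum_range_succ, ih]
      have := v_tel x hx n
      field_simp
      linarith
  simp_rw [h]
  have := ((v_tendsto x hx).const_sub 1).div_const x
  simpa using this

lemma w_diff (x : ℝ) (hx : 0 < x) (k : ℕ) : w k x - w k (x+1) = w (k+1) x := by
  rw [w, w, w, rp_succ x (k+1), Nat.factorial_succ]
  have h : risingProdR (x+1) (k+1) = risingProdR x (k+1) * (x + (k+1:ℕ) + 1) / (x+1) := by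
    rw [← rp_succ, rp_shift x (k+1)]; field_simp
  rw [h]
  have := (rp_pos x hx (k+1)).ne'
  have : x + (k+1:ℕ) + 1 ≠ 0 := by positivity
  have : x + 1 ≠ 0 := by positivity
  push_cast at *
  field_simp
  ring

lemma e_tel (x s : ℝ) (hx : 0 < x) (k : ℕ) :
    r k s * v k x - r (k+1) s * v (k+1) x = (x+1-s) * (r k s * w k x) := by
  rw [r_succ, v, v, w, rp_succ, Nat.factorial_succ]
  have := (rp_pos x hx k).ne'
  have : x + k + 1 ≠ 0 := by positivity
  push_cast
  field_simp
  ring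

lemma part_sum (x s : ℝ) (hx : 0 < x) (hs : s ≤ 1) (K : ℕ) :
    ∑ k ∈ range K, r (k+1) s * w (k+1) x =
      (1/(x+1-s) - 1/(x+1)) - r (K+1) s * v (K+1) x / (x+1-s) := by
  have h1 : x + 1 - s ≠ 0 := by linarith
  have h2 : x + 1 ≠ 0 := by linarith
  induction K with
  | zero => simp [r, rf, v, risingProdR]; field_simp; ring
  | succ n ih =>
    rw [sum_range_succ, ih]
    have := e_tel x s hx (n+1)
    field_simp
    linear_combination -(x+1) * this

lemma int_calc (x : ℝ) (hx : 0 < x) :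
    ∫ s in (0:ℝ)..1, (1/(x+1-s) - 1/(x+1)) = Real.log (x+1) - Real.log x - 1/(x+1) := by
  have hd : ∀ s ∈ Set.uIcc (0:ℝ) 1, HasDerivAt (fun s => - Real.log (x+1-s) - s/(x+1)) (1/(x+1-s) - 1/(x+1)) s := by
    intro s hs
    rw [Set.uIcc_of_le zero_le_one] at hs
    have hne : x+1-s ≠ 0 := by linarith [hs.2]
    have h1 : HasDerivAt (fun s : ℝ => x+1-s) (-1) s := by
      simpa using (hasDerivAt_id s).const_sub (x+1)
    have h2 := (h1.log hne).neg.sub ((hasDerivAt_id s).div_const (x+1))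
    exact h2.congr_deriv (by ring)
  rw [intervalIntegral.integral_eq_sub_of_hasDerivAt hd]
  · simp; ring
  · apply ContinuousOn.intervalIntegrable
    intro s hs
    rw [Set.uIcc_of_le zero_le_one] at hs
    have hne : x+1-s ≠ 0 := by linarith [hs.2]
    apply ContinuousAt.continuousWithinAt
    fun_prop (disch := assumption)

lemma part_int (x : ℝ) (hx : 0 < x) (K : ℕ) :
    |(∫ s in (0:ℝ)..1, ∑ k ∈ range K, r (k+1) s * w (k+1) x) -
      (Real.log (x+1) - Real.log x - 1/(x+1))| ≤ v (K+1) x / x := by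
  have hc : Continuous fun s => ∑ k ∈ range K, r (k+1) s * w (k+1) x :=
    continuous_finsetSum _ fun k _ => (cont_r _).mul_const _
  have hI : IntervalIntegrable (fun s : ℝ => 1/(x+1-s) - 1/(x+1)) MeasureTheory.volume 0 1 := by
    apply ContinuousOn.intervalIntegrable
    intro s hs
    rw [Set.uIcc_of_le zero_le_one] at hs
    have hne : x+1-s ≠ 0 := by linarith [hs.2]
    apply ContinuousAt.continuousWithinAt
    fun_prop (disch := assumption)
  rw [← int_calc x hx, ← intervalIntegral.integral_sub (hc.intervalIntegrable _ _) hI]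
  have := intervalIntegral.norm_integral_le_of_norm_le_const (a := 0) (b := 1)
      (f := fun s => ∑ k ∈ range K, r (k+1) s * w (k+1) x - (1/(x+1-s) - 1/(x+1)))
      (C := v (K+1) x / x) (fun s hs => by
        rw [Set.uIoc_of_le zero_le_one] at hs
        rw [part_sum x s hx hs.2, sub_sub_cancel_left, norm_neg, Real.norm_eq_abs]
        have hp : 0 < x+1-s := by linarith [hs.2]
        have hv := v_pos x hx (K+1)
        have hr := r_nonneg (K+1) s hs.1.le
        have hr1 := r_le (K+1) s hs.1.le hs.2
        rw [abs_of_nonneg (by positivity)]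
        have : x ≤ x + 1 - s := by linarith [hs.2]
        calc _ ≤ 1 * v (K+1) x / x := by gcongr
          _ = _ := by ring)
  simpa using this

noncomputable def F (y x : ℝ) : ℝ := ∑' k, R y (k+1) * w k x

lemma F_summable (y x : ℝ) (h0 : 0 ≤ y) (h1 : y ≤ 1) (hx : 0 < x) : Summable fun k => R y (k+1) * w k x := by
  refine Summable.of_norm_bounded ((w_hasSum x hx).summable.mul_left 2) fun k => ?_
  rw [norm_mul, Real.norm_eq_abs, Real.norm_eq_abs, abs_of_pos (w_pos x hx k)]
  exact mul_le_mul_of_nonneg_right (R_bound y h0 h1 k) (w_pos x hx k).le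

lemma F_bound (y x : ℝ) (h0 : 0 ≤ y) (h1 : y ≤ 1) (hx : 0 < x) : |F y x| ≤ 2/x := by
  have := tsum_of_norm_bounded (f := fun k => R y (k+1) * w k x) ((w_hasSum x hx).mul_left 2) fun k => by
    rw [norm_mul, Real.norm_eq_abs, Real.norm_eq_abs, abs_of_pos (w_pos x hx k)]
    exact mul_le_mul_of_nonneg_right (R_bound y h0 h1 k) (w_pos x hx k).le
  rw [mul_one_div] at this
  exact this

lemma F_rec (y x : ℝ) (h0 : 0 ≤ y) (h1 : y ≤ 1) (hx : 0 < x) :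
    F y x - F y (x+1) = 1/(x+1-y) - (Real.log (x+1) - Real.log x) := by
  have hs1 := F_summable y x h0 h1 hx
  have hs2 := F_summable y (x+1) h0 h1 (by linarith)
  have hs := hs1.sub hs2
  rw [F, F, ← hs1.tsum_sub hs2]
  have e : ∀ k, R y (k+1) * w k x - R y (k+1) * w k (x+1) = R y (k+1) * w (k+1) x := by
    intro k; rw [← mul_sub, w_diff x hx]
  simp_rw [e] at hs ⊢
  refine tendsto_nhds_unique hs.hasSum.tendsto_sum_nat ?_
  have hpart : ∀ K, ∑ k ∈ range K, R y (k+1) * w (k+1) x =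
     ∑ k ∈ range K, r (k+1) y * w (k+1) x - ∫ s in (0:ℝ)..1, ∑ k ∈ range K, r (k+1) s * w (k+1) x := by
    intro K
    rw [intervalIntegral.integral_finsetSum (fun k _ => ((cont_r _).mul_const _).intervalIntegrable _ _), ← sum_sub_distrib]
    refine sum_congr rfl fun k _ => ?_
    rw [intervalIntegral.integral_mul_const, R, sub_mul]
  have hv : Filter.Tendsto (fun K => v (K+1) x / x) Filter.atTop (nhds 0) := by
    simpa using ((v_tendsto x hx).comp (Filter.tendsto_add_atTop_nat 1)).div_const x
  have hB : Filter.Tendsto (fun K => ∫ s in (0:ℝ)..1, ∑ k ∈ range K, r (k+1) s * w (k+1) x) Filter.atTop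
      (nhds (Real.log (x+1) - Real.log x - 1/(x+1))) := by
    rw [tendsto_iff_dist_tendsto_zero]
    exact squeeze_zero (fun _ => dist_nonneg) (fun K => part_int x hx K) hv
  have hA : Filter.Tendsto (fun K => ∑ k ∈ range K, r (k+1) y * w (k+1) x) Filter.atTop
      (nhds (1/(x+1-y) - 1/(x+1))) := by
    rw [tendsto_iff_dist_tendsto_zero]
    refine squeeze_zero (fun _ => dist_nonneg) (fun K => ?_) hv
    rw [part_sum x y hx h1, Real.dist_eq, sub_sub_cancel_left, abs_neg]
    have hp : 0 < x+1-y := by linarith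
    have hv := v_pos x hx (K+1)
    have hr := r_nonneg (K+1) y h0
    have hr1 := r_le (K+1) y h0 h1
    rw [abs_of_nonneg (by positivity)]
    have : x ≤ x + 1 - y := by linarith
    calc _ ≤ 1 * v (K+1) x / x := by gcongr
      _ = _ := by ring
  have := hA.sub hB
  simp_rw [hpart]
  convert this using 2
  ring

noncomputable def psi (x : ℝ) : ℝ := deriv Real.Gamma x / Real.Gamma x

lemma gdiff (x : ℝ) (hx : 0 < x) : DifferentiableAt ℝ Real.Gamma x :=
  Real.differentiableAt_Gamma fun m => by
    have : (0:ℝ) ≤ m := Nat.cast_nonneg m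
    linarith

lemma psi_has (x : ℝ) (hx : 0 < x) : HasDerivAt (Real.log ∘ Real.Gamma) (psi x) x :=
  (gdiff x hx).hasDerivAt.log (Real.Gamma_pos_of_pos hx).ne'

lemma lg_add (x : ℝ) (hx : 0 < x) : (Real.log ∘ Real.Gamma) (x+1) = (Real.log ∘ Real.Gamma) x + Real.log x := by
  simp only [Function.comp]
  rw [Real.Gamma_add_one hx.ne', Real.log_mul hx.ne' (Real.Gamma_pos_of_pos hx).ne', add_comm]

lemma psi_add (x : ℝ) (hx : 0 < x) : psi (x+1) = psi x + 1/x := by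
  have h1 : HasDerivAt (fun t => (Real.log ∘ Real.Gamma) (t+1)) (psi (x+1)) x :=
    (psi_has (x+1) (by linarith)).comp_add_const x 1
  have h2 : HasDerivAt (fun t => (Real.log ∘ Real.Gamma) t + Real.log t) (psi x + 1/x) x := by
    rw [one_div]
    exact (psi_has x hx).add (Real.hasDerivAt_log hx.ne')
  refine h1.unique (h2.congr_of_eventuallyEq ?_)
  filter_upwards [lt_mem_nhds hx] with t ht
  exact lg_add t ht

lemma psi_le (x : ℝ) (hx : 0 < x) : psi x ≤ Real.log x := by
  have := Real.convexOn_log_Gamma.le_slope_of_hasDerivAt (Set.mem_Ioi.2 hx) (Set.mem_Ioi.2 (by linarith : 0 < x+1))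
    (by linarith) (psi_has x hx)
  rw [slope_def_field, lg_add x hx] at this
  simpa using this

lemma le_psi (x : ℝ) (hx : 0 < x) : Real.log x - 1/x ≤ psi x := by
  have := Real.convexOn_log_Gamma.slope_le_of_hasDerivAt (Set.mem_Ioi.2 hx) (Set.mem_Ioi.2 (by linarith : 0 < x+1))
    (by linarith) (psi_has (x+1) (by linarith))
  rw [slope_def_field, lg_add x hx, psi_add x hx] at this
  simp at this ⊢
  linarith

lemma real_main (y x : ℝ) (h0 : 0 ≤ y) (h1 : y ≤ 1) (hx : 0 < x) :
    psi (x + 1 - y) = Real.log x - F y x := by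
  let E : ℝ → ℝ := fun x => psi (x+1-y) - Real.log x + F y x
  have hrec : ∀ t, 0 < t → E (t+1) = E t := by
    intro t ht
    have h := F_rec y t h0 h1 ht
    have h2 := psi_add (t+1-y) (by linarith)
    simp only [E]
    rw [show t+1+1-y = t+1-y+1 by ring, h2]
    linarith
  have hn : ∀ n : ℕ, E (x+n) = E x := by
    intro n
    induction n with
    | zero => simp
    | succ n ih => rw [← ih, ← hrec (x+n) (by positivity)]; push_cast; ring_nf
  have hb : ∀ t, 0 < t → |E t| ≤ 3/t := by
    intro t ht
    have hw : 0 < t+1-y := by linarith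
    have a1 := psi_le _ hw
    have a2 := le_psi _ hw
    have a3 := abs_le.1 (F_bound y t h0 h1 ht)
    have a4 : Real.log t ≤ Real.log (t+1-y) := Real.log_le_log ht (by linarith)
    have a5 : Real.log (t+1-y) - Real.log t ≤ 1/t := by
      rw [← Real.log_div hw.ne' ht.ne']
      refine (Real.log_le_sub_one_of_pos (by positivity)).trans ?_
      rw [div_sub_one ht.ne']
      gcongr
      linarith
    have a6 : 1/(t+1-y) ≤ 1/t := by gcongr; linarith
    have e3 : 3/t = 2/t + 1/t := by ring
    rw [abs_le]
    simp only [E]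
    constructor <;> linarith
  have hlim : Filter.Tendsto (fun n : ℕ => 3/(x+n)) Filter.atTop (nhds 0) :=
    (Filter.tendsto_atTop_add_const_left _ x tendsto_natCast_atTop_atTop).const_div_atTop 3
  have : |E x| ≤ 0 := by
    refine ge_of_tendsto' hlim fun n => ?_
    rw [← hn n]
    exact hb _ (by positivity)
  have h := abs_eq_zero.1 (le_antisymm this (abs_nonneg _))
  simp only [E] at h
  linarith

lemma norm_rp (z : ℂ) (x : ℝ) (hx : 0 < x) (hz : x ≤ z.re) (k : ℕ) : risingProdR x k ≤ ‖risingProd z k‖ := by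
  rw [risingProd, norm_prod, risingProdR]
  refine prod_le_prod (fun i _ => by positivity) fun i _ => ?_
  refine le_trans ?_ (Complex.re_le_norm _)
  simp; exact hz

lemma crp_ne (z : ℂ) (hz : 0 < z.re) (k : ℕ) : risingProd z k ≠ 0 := by
  rw [← norm_pos_iff]
  exact (rp_pos _ hz k).trans_le (norm_rp z _ hz le_rfl k)

lemma crp_succ (z : ℂ) (k : ℕ) : risingProd z (k+1) = risingProd z k * (z + k + 1) := by
  rw [risingProd, prod_range_succ]; rfl

lemma b_beta (y : ℝ) (a k : ℕ) : b y a (k+1) = beta y a k * (k.factorial : ℝ) := by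
  rw [beta, div_mul_cancel₀]; positivity

lemma term_bound (y : ℝ) (a : ℕ) (C : ℝ) (hC : ∀ m, |beta y a m| ≤ C) (z : ℂ) (x : ℝ) (hx : 0 < x) (hz : x ≤ z.re)
    (k : ℕ) : ‖(b y a (k+1) : ℂ) / risingProd z (k+1)‖ ≤ C * w k x := by
  rw [norm_div, Complex.norm_real, Real.norm_eq_abs, b_beta, abs_mul, Nat.abs_cast, w, ← mul_div_assoc]
  have h1 := norm_rp z x hx hz (k+1)
  have h2 := rp_pos x hx (k+1)
  have h3 := hC k
  have h4 : 0 ≤ C := (abs_nonneg _).trans h3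
  gcongr

lemma term_summable (y : ℝ) (h0 : 0 ≤ y) (h1 : y ≤ 1) (a : ℕ) (z : ℂ) (hz : 0 < z.re) :
    Summable fun k : ℕ => ‖(b y a (k+1) : ℂ) / risingProd z (k+1)‖ := by
  obtain ⟨C, hC⟩ := beta_bound y h0 h1 a
  exact Summable.of_nonneg_of_le (fun _ => norm_nonneg _) (term_bound y a C hC z z.re hz le_rfl)
    ((w_hasSum _ hz).summable.mul_left C)

noncomputable def G (y : ℝ) (a : ℕ) (z : ℂ) : ℂ := ∑' k : ℕ, (b y a (k+1) : ℂ) / risingProd z (k+1)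

lemma G_rec (y : ℝ) (h0 : 0 ≤ y) (h1 : y ≤ 1) (a : ℕ) (z : ℂ) (hz : 0 < z.re) :
    G y (a+1) z = z * G y a z - b y a 1 := by
  have hs := (term_summable y h0 h1 a z hz).of_norm
  have hs' := (term_summable y h0 h1 (a+1) z hz).of_norm
  have hpart : ∀ K : ℕ, ∑ k ∈ range K, (b y (a+1) (k+1) : ℂ) / risingProd z (k+1) =
      z * ∑ k ∈ range (K+1), (b y a (k+1) : ℂ) / risingProd z (k+1) - b y a 1
       + ((K:ℂ)+1) * b y a (K+1) / risingProd z (K+1) := by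
    intro K
    induction K with
    | zero =>
      have h := crp_ne z hz 1
      simp [risingProd] at h ⊢
      field_simp
      ring
    | succ n ih =>
      rw [sum_range_succ, ih, sum_range_succ _ (n+1), b_rec, crp_succ z (n+1)]
      have e1 := crp_ne z hz (n+1)
      have e2 := crp_ne z hz (n+2)
      rw [crp_succ z (n+1)] at e2
      have e3 := right_ne_zero_of_mul e2
      push_cast at *
      field_simp
      ring
  have hd : Filter.Tendsto (fun K : ℕ => ((K:ℂ)+1) * b y a (K+1) / risingProd z (K+1)) Filter.atTop (nhds 0) := by
    obtain ⟨C, hC⟩ := beta_bound y h0 h1 a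
    have hv : Filter.Tendsto (fun K => C * v (K+1) z.re) Filter.atTop (nhds 0) := by
      simpa using ((v_tendsto _ hz).comp (Filter.tendsto_add_atTop_nat 1)).const_mul C
    refine squeeze_zero_norm (fun K => ?_) hv
    have h := term_bound y a C hC z z.re hz le_rfl K
    have e : v (K+1) z.re = (K+1) * w K z.re := by
      rw [v, w, Nat.factorial_succ]; push_cast; ring
    rw [mul_div_assoc, norm_mul, e]
    have e2 : ‖(K:ℂ)+1‖ = (K:ℝ)+1 := by
      rw [← Nat.cast_add_one, Complex.norm_natCast]; simp
    rw [e2]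
    have : (0:ℝ) ≤ (K:ℝ)+1 := by positivity
    nlinarith
  have hlim := ((((hs.hasSum.tendsto_sum_nat).comp (Filter.tendsto_add_atTop_nat 1)).const_mul z).sub_const
    (b y a 1 : ℂ)).add hd
  refine tendsto_nhds_unique hs'.hasSum.tendsto_sum_nat ?_
  simp_rw [hpart]
  rw [add_zero] at hlim
  exact hlim

lemma G_diff (y : ℝ) (h0 : 0 ≤ y) (h1 : y ≤ 1) (a : ℕ) (z : ℂ) (hz : 0 < z.re) :
    DifferentiableAt ℂ (G y a) z := by
  obtain ⟨C, hC⟩ := beta_bound y h0 h1 a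
  have hx : 0 < z.re/2 := by linarith
  have hU : IsOpen {u : ℂ | z.re/2 < u.re} := isOpen_lt continuous_const Complex.continuous_re
  have := Complex.differentiableOn_tsum_of_summable_norm (U := {u : ℂ | z.re/2 < u.re})
    (F := fun k u => (b y a (k+1) : ℂ) / risingProd u (k+1))
    ((w_hasSum _ hx).summable.mul_left C) (fun k u hu => by
      apply DifferentiableAt.differentiableWithinAt
      refine DifferentiableAt.div (by fun_prop) ?_ (crp_ne u (hx.trans hu) _)
      unfold risingProd
      fun_prop) hU (fun k u hu => term_bound y a C hC u _ hx (le_of_lt hu) k)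
  exact this.differentiableAt (hU.mem_nhds (by simp only [Set.mem_ofPred_eq]; linarith))

lemma psi_cast (x : ℝ) (hx : 0 < x) : digamma (x:ℂ) = (psi x : ℂ) := by
  have hd : DifferentiableAt ℂ Complex.Gamma (x:ℂ) := Complex.differentiableAt_Gamma _ fun m h => by
    have := congrArg Complex.re h
    simp at this
    have : (0:ℝ) ≤ m := Nat.cast_nonneg m
    linarith
  have h1 : HasDerivAt (fun t : ℝ => Complex.Gamma t) (deriv Complex.Gamma x) x := hd.hasDerivAt.comp_ofReal
  have h2 : HasDerivAt (fun t : ℝ => ((Real.Gamma t : ℝ) : ℂ)) ((deriv Real.Gamma x : ℝ) : ℂ) x :=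
    (gdiff x hx).hasDerivAt.ofReal_comp
  simp_rw [Complex.Gamma_ofReal] at h1
  rw [digamma, h1.unique h2, Complex.Gamma_ofReal, psi]
  push_cast; rfl

lemma psi_diff (z : ℂ) (hz : 0 < z.re) : DifferentiableAt ℂ digamma z := by
  have hU : IsOpen {u : ℂ | 0 < u.re} := isOpen_lt continuous_const Complex.continuous_re
  have hG : DifferentiableOn ℂ Complex.Gamma {u : ℂ | 0 < u.re} := fun u hu =>
    (Complex.differentiableAt_Gamma _ fun m h => by
      have := congrArg Complex.re h
      simp at this
      have h2 : (0:ℝ) ≤ m := Nat.cast_nonneg m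
      have h3 : 0 < u.re := hu
      linarith).differentiableWithinAt
  have hm := hU.mem_nhds (show z ∈ {u : ℂ | 0 < u.re} from hz)
  exact ((hG.deriv hU).differentiableAt hm).div (hG.differentiableAt hm) (Complex.Gamma_ne_zero_of_re_pos hz)

lemma G_cast (y x : ℝ) : G y 0 (x:ℂ) = (F y x : ℂ) := by
  rw [G, F, Complex.ofReal_tsum]
  congr 1; ext k
  rw [b_beta, beta_zero, w, risingProd, risingProdR]
  push_cast
  ring

lemma complex_main (y : ℝ) (h0 : 0 ≤ y) (h1 : y ≤ 1) (z : ℂ) (hz : 0 < z.re) :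
    digamma (z + 1 - y) = Complex.log z - G y 0 z := by
  have hU : IsOpen {u : ℂ | 0 < u.re} := isOpen_lt continuous_const Complex.continuous_re
  have hf : AnalyticOnNhd ℂ (fun z : ℂ => digamma (z+1-y)) {u : ℂ | 0 < u.re} := by
    apply DifferentiableOn.analyticOnNhd _ hU
    intro u hu
    apply DifferentiableAt.differentiableWithinAt
    have hu' : 0 < u.re := hu
    refine DifferentiableAt.comp u (g := digamma) (psi_diff _ ?_) (by fun_prop)
    simp; linarith
  have hg : AnalyticOnNhd ℂ (fun z : ℂ => Complex.log z - G y 0 z) {u : ℂ | 0 < u.re} := by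
    apply DifferentiableOn.analyticOnNhd _ hU
    intro u hu
    apply DifferentiableAt.differentiableWithinAt
    exact (Complex.differentiableAt_log (Or.inl hu)).sub (G_diff y h0 h1 0 u hu)
  have hc : IsPreconnected {u : ℂ | 0 < u.re} := (convex_halfSpace_re_gt 0).isPreconnected
  refine hf.eqOn_of_preconnected_of_frequently_eq hg hc (z₀ := 1) (by simp) ?_ hz
  have hreal : ∀ x : ℝ, 0 < x → digamma ((x:ℂ)+1-y) = Complex.log x - G y 0 x := by
    intro x hx
    have := psi_cast (x+1-y) (by linarith)
    push_cast at this
    rw [this, real_main y x h0 h1 hx, G_cast]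
    push_cast [Complex.ofReal_log hx.le]
    rfl
  have ht : Filter.Tendsto (fun n : ℕ => (((1 + 1/((n:ℝ)+1)) : ℝ) : ℂ)) Filter.atTop (nhdsWithin 1 {1}ᶜ) := by
    rw [tendsto_nhdsWithin_iff]
    constructor
    · have : Filter.Tendsto (fun n : ℕ => (1 + 1/((n:ℝ)+1)) ) Filter.atTop (nhds (1+0)) :=
        tendsto_one_div_add_atTop_nhds_zero_nat.const_add 1
      rw [add_zero] at this
      have h2 := (Complex.continuous_ofReal.tendsto 1).comp this
      rw [Complex.ofReal_one] at h2
      exact h2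
    · refine Filter.Eventually.of_forall fun n => ?_
      simp only [Set.mem_compl_iff, Set.mem_singleton_iff, Complex.ofReal_eq_one]
      have : 0 < 1/((n:ℝ)+1) := by positivity
      linarith
  refine ht.frequently (Filter.Frequently.of_forall fun n => ?_)
  exact hreal _ (by positivity)

lemma all_a (y : ℝ) (h0 : 0 ≤ y) (h1 : y ≤ 1) (z : ℂ) (hz : 0 < z.re) (a : ℕ) :
    digamma (z + 1 - y) = Complex.log z - ∑ k ∈ Icc 1 a, (bernPoly k y : ℂ) / (k * z ^ k) - 1 / z^a * G y a z := by
  have hz0 : z ≠ 0 := by rintro rfl; simp at hz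
  induction a with
  | zero => simpa using complex_main y h0 h1 z hz
  | succ a ih =>
    rw [ih, sum_Icc_succ_top (by omega), G_rec y h0 h1 a z hz]
    have hb : b y a 1 = bernPoly (a+1) y / ((a:ℝ)+1) := by
      simp [b, stirling1Unsigned, add_comm]
    rw [hb]
    have : (a:ℂ)+1 ≠ 0 := Nat.cast_add_one_ne_zero a
    push_cast
    field_simp
    ring

lemma term_eq (y : ℝ) (a : ℕ) (z : ℂ) (k : ℕ) :
    (-1 : ℂ) ^ (k + 1 + 1) *
          (∑ l ∈ Icc 1 (k + 1),
            (-1 : ℂ) ^ l / (l + a) * (S1 (k + 1) l : ℂ) * (bernPoly (l + a) y : ℂ)) /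
        risingProd z (k + 1) = -((b y a (k+1) : ℂ) / risingProd z (k+1)) := by
  rw [← neg_div]
  congr 1
  rw [b, range_eq_Ico, Complex.ofReal_sum, mul_sum, ← sum_neg_distrib,
    sum_Ico_add' (fun l => -(((stirling1Unsigned (k+1) l : ℝ) * (bernPoly (l+a) y / ((l+a : ℕ) : ℝ)) : ℝ) : ℂ)) 0 (k+1) 1]
  refine sum_congr (by ext; simp) fun l _ => ?_
  have hs : (-1:ℂ)^(k+1+1) * (-1)^l * (-1)^(k+1+l) = -1 := by
    rw [← pow_add, ← pow_add]
    exact Odd.neg_one_pow ⟨k+1+l, by ring⟩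
  rw [S1]
  push_cast
  linear_combination ((stirling1Unsigned (k+1) l : ℂ) * (bernPoly (l+a) y) / (l+a)) * hs

end DIF

open Finset in
/-- Inverse factorial series expansion for the digamma function
(formula (24) of Theorem 4.3). -/
theorem digamma_inverse_factorial_series (y : ℝ) (hy0 : 0 ≤ y) (hy1 : y ≤ 1)
    (a : ℕ) (z : ℂ) (hz : 0 < z.re) :
    Summable (fun k : ℕ =>
      ‖(-1 : ℂ) ^ (k + 1 + 1) *
          (∑ l ∈ Icc 1 (k + 1),
            (-1 : ℂ) ^ l / (l + a) * (S1 (k + 1) l : ℂ) * (bernPoly (l + a) y : ℂ)) /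
        risingProd z (k + 1)‖) ∧
    digamma (z + 1 - y) =
      Complex.log z - ∑ k ∈ Icc 1 a, (bernPoly k y : ℂ) / (k * z ^ k) +
        1 / z ^ a *
          ∑' k : ℕ,
            (-1 : ℂ) ^ (k + 1 + 1) *
                (∑ l ∈ Icc 1 (k + 1),
                  (-1 : ℂ) ^ l / (l + a) * (S1 (k + 1) l : ℂ) * (bernPoly (l + a) y : ℂ)) /
              risingProd z (k + 1) := by
  simp_rw [DIF.term_eq]
  refine ⟨by simpa only [norm_neg] using DIF.term_summable y hy0 hy1 a z hz, ?_⟩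
  rw [DIF.all_a y hy0 hy1 z hz a, tsum_neg, DIF.G]
  ring
end
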